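/- arXiv:1903.03331 — 6 statements merged into one kernel-verified Lean document; each statement's English description precedes it below -/
import Mathlib

section
/- (Algebraic reduction property) For every natural number n and every GLP_ω formula φ, the formula ⟨n+1⟩φ is n-conservative over the set { Q_n^k(φ) : k < ω }; that is, for every formula ψ, ⟨n+1⟩φ ⊢_GLP ⟨n⟩ψ if and only if { Q_n^k(φ) : k < ω } ⊢_GLP ⟨n⟩ψ. -/
/-- Formulas of polymodal provability logic GLP: propositional variables, ⊤,
Boolean connectives, and a modality `[ξ]` for each ordinal `ξ`. -/
inductive GLPFormula : Type 1 where
  | var : ℕ → GLPFormula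
  | top : GLPFormula
  | neg : GLPFormula → GLPFormula
  | and : GLPFormula → GLPFormula → GLPFormula
  | imp : GLPFormula → GLPFormula → GLPFormula
  | box : Ordinal → GLPFormula → GLPFormula

namespace GLPFormula

/-- `⟨ξ⟩φ` abbreviates `¬[ξ]¬φ`. -/
def dia (ξ : Ordinal) (φ : GLPFormula) : GLPFormula := neg (box ξ (neg φ))

/-- Biconditional, defined from the other connectives. -/
def biimp (φ ψ : GLPFormula) : GLPFormula := and (imp φ ψ) (imp ψ φ)

/-- The set of ordinals occurring as modality indices in a formula. -/
def mods : GLPFormula → Set Ordinal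
  | var _ => ∅
  | top => ∅
  | neg φ => mods φ
  | and φ ψ => mods φ ∪ mods ψ
  | imp φ ψ => mods φ ∪ mods ψ
  | box ξ φ => insert ξ (mods φ)

end GLPFormula

/-- A propositional tautology: true under every Boolean valuation that respects
the Boolean connectives (variables and boxed formulas are treated as atoms). -/
def IsTautology (φ : GLPFormula) : Prop :=
  ∀ v : GLPFormula → Bool,
    v GLPFormula.top = true →
    (∀ ψ, v ψ.neg = !v ψ) →
    (∀ ψ χ, v (ψ.and χ) = (v ψ && v χ)) →
    (∀ ψ χ, v (ψ.imp χ) = (!v ψ || v χ)) →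
    v φ = true

/-- Derivability in GLP, with modality indices restricted to the set `S`
(`S = Set.univ` gives full GLP; `S = Set.Iio ω` gives GLP_ω). -/
inductive GLPProof (S : Set Ordinal) : GLPFormula → Prop where
  | taut {φ} : φ.mods ⊆ S → IsTautology φ → GLPProof S φ
  | distr {ξ φ ψ} : ξ ∈ S → φ.mods ⊆ S → ψ.mods ⊆ S →
      GLPProof S ((GLPFormula.box ξ (φ.imp ψ)).imp
        ((GLPFormula.box ξ φ).imp (GLPFormula.box ξ ψ)))
  | trans {ξ φ} : ξ ∈ S → φ.mods ⊆ S →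
      GLPProof S ((GLPFormula.box ξ φ).imp (GLPFormula.box ξ (GLPFormula.box ξ φ)))
  | lob {ξ φ} : ξ ∈ S → φ.mods ⊆ S →
      GLPProof S ((GLPFormula.box ξ ((GLPFormula.box ξ φ).imp φ)).imp (GLPFormula.box ξ φ))
  | negIntro {ξ ζ φ} : ξ < ζ → ξ ∈ S → ζ ∈ S → φ.mods ⊆ S →
      GLPProof S ((GLPFormula.dia ζ φ).imp (GLPFormula.dia ξ φ))
  | mono {ξ ζ φ} : ξ < ζ → ξ ∈ S → ζ ∈ S → φ.mods ⊆ S →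
      GLPProof S ((GLPFormula.dia ξ φ).imp (GLPFormula.box ζ (GLPFormula.dia ξ φ)))
  | mp {φ ψ} : GLPProof S (φ.imp ψ) → GLPProof S φ → GLPProof S ψ
  | nec {ξ φ} : ξ ∈ S → GLPProof S φ → GLPProof S (GLPFormula.box ξ φ)

/-- Derivability in full GLP (modalities indexed by all ordinals). -/
def GLPProves (φ : GLPFormula) : Prop := GLPProof Set.univ φ

/-- Derivability in GLP_ω (modalities indexed by natural numbers). -/
def GLPomegaProves (φ : GLPFormula) : Prop := GLPProof (Set.Iio Ordinal.omega0) φ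

/-- A GLP_ω formula: all modality indices are below ω. -/
def IsOmegaFormula (φ : GLPFormula) : Prop := φ.mods ⊆ Set.Iio Ordinal.omega0

/-- Conjunction of a finite list of formulas. -/
def listConj : List GLPFormula → GLPFormula
  | [] => GLPFormula.top
  | φ :: l => φ.and (listConj l)

/-- `SetProves S τ χ`: the set `τ` proves `χ`, i.e. `ψ₁ ∧ … ∧ ψₘ → χ` is
derivable for some finite list of members of `τ`. -/
def SetProves (S : Set Ordinal) (τ : Set GLPFormula) (χ : GLPFormula) : Prop :=
  ∃ l : List GLPFormula, (∀ ψ ∈ l, ψ ∈ τ) ∧ GLPProof S ((listConj l).imp χ)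

/-- The iterated consistency formulas: `Q n 0 φ = ⊤`, `Q n (k+1) φ = ⟨n⟩(φ ∧ Q n k φ)`. -/
def Q (n : Ordinal) : ℕ → GLPFormula → GLPFormula
  | 0, _ => GLPFormula.top
  | k + 1, φ => GLPFormula.dia n ((GLPFormula.and φ (Q n k φ)))

/-- `diaPow n k φ` is `⟨n⟩^k φ`, `k` iterated applications of `⟨n⟩`. -/
def diaPow (n : Ordinal) : ℕ → GLPFormula → GLPFormula
  | 0, φ => φ
  | k + 1, φ => GLPFormula.dia n (diaPow n k φ)

/-- The formula corresponding to a worm, given as its list of modality indices: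
`[] ↦ ⊤` and `γ :: A ↦ ⟨γ⟩A`. -/
def wormFormula : List Ordinal → GLPFormula
  | [] => GLPFormula.top
  | γ :: A => GLPFormula.dia γ (wormFormula A)

/-- The generalized `Q`-formula: `Q(⊤,φ) = ⊤`, `Q(⟨γ⟩A, φ) = ⟨γ⟩(φ ∧ Q(A,φ))`. -/
def QWorm : List Ordinal → GLPFormula → GLPFormula
  | [], _ => GLPFormula.top
  | γ :: A, φ => GLPFormula.dia γ (GLPFormula.and φ (QWorm A φ))

/-- Boolean valuations. -/
def BVal (v : GLPFormula → Bool) : Prop :=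
  v GLPFormula.top = true ∧
    (∀ ψ, v ψ.neg = !v ψ) ∧
    (∀ ψ χ, v (ψ.and χ) = (v ψ && v χ)) ∧
    (∀ ψ χ, v (ψ.imp χ) = (!v ψ || v χ))

/-- Boolean valuations making all theorems of GLP true. -/
def WVal (v : GLPFormula → Bool) : Prop :=
  BVal v ∧ ∀ χ, GLPProof Set.univ χ → v χ = true

theorem BVal.listConj {v : GLPFormula → Bool} (h : BVal v) (l : List GLPFormula) :
    v (listConj l) = true ↔ ∀ t ∈ l, v t = true := by
  induction l with
  | nil => simp [_root_.listConj, h.1]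
  | cons a l ih => simp [_root_.listConj, h.2.2.1, ih]

theorem BVal.dia {v : GLPFormula → Bool} (h : BVal v) (ξ : Ordinal) (a : GLPFormula) :
    v (GLPFormula.dia ξ a) = !v (GLPFormula.box ξ a.neg) := by
  simp [GLPFormula.dia, h.2.1]

theorem prove_listConj (m : List GLPFormula) (h : ∀ t ∈ m, GLPProof Set.univ t) :
    GLPProof Set.univ (listConj m) := by
  induction m with
  | nil => exact .taut (Set.subset_univ _) (fun v h _ _ _ => h)
  | cons a m ih =>
    have h1 : GLPProof Set.univ (a.imp ((listConj m).imp (a.and (listConj m)))) := by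
      refine .taut (Set.subset_univ _) (fun v _ h2 h3 h4 => ?_)
      simp only [h4, h3]
      cases v a <;> cases v (listConj m) <;> rfl
    exact .mp (.mp h1 (h a (by simp))) (ih (fun t ht => h t (by simp [ht])))

theorem isClosed_BVal : IsClosed {v : GLPFormula → Bool | BVal v} := by
  have c2 : ∀ f : Bool × Bool → Bool, Continuous f := fun f => continuous_of_discreteTopology
  have c1 : ∀ f : Bool → Bool, Continuous f := fun f => continuous_of_discreteTopology
  unfold BVal
  simp only [Set.ofPred_and, Set.ofPred_forall]
  refine IsClosed.inter ?_ (IsClosed.inter ?_ (IsClosed.inter ?_ ?_))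
  · exact isClosed_eq (continuous_apply _) continuous_const
  · exact isClosed_iInter fun a => isClosed_eq (continuous_apply _)
      (Continuous.comp' (c1 (fun p => !p)) (continuous_apply a))
  · exact isClosed_iInter fun a => isClosed_iInter fun b => isClosed_eq (continuous_apply _)
      (Continuous.comp' (f := fun x : GLPFormula → Bool => (x a, x b)) (c2 (fun p => p.1 && p.2)) ((continuous_apply a).prodMk (continuous_apply b)))
  · exact isClosed_iInter fun a => isClosed_iInter fun b => isClosed_eq (continuous_apply _)
      (Continuous.comp' (f := fun x : GLPFormula → Bool => (x a, x b)) (c2 (fun p => !p.1 || p.2)) ((continuous_apply a).prodMk (continuous_apply b)))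

/-- Compactness and completeness. -/
theorem compl (T : Set GLPFormula) (χ : GLPFormula)
    (h : ∀ v, WVal v → (∀ t ∈ T, v t = true) → v χ = true) :
    SetProves Set.univ T χ := by
  classical
  by_contra hc
  let T' : Set GLPFormula := {t | GLPProof Set.univ t ∨ t ∈ T ∨ t = χ.neg}
  have key := (isClosed_BVal.isCompact).inter_iInter_nonempty
    (fun t : T' => {v : GLPFormula → Bool | v t.1 = true})
    (fun t => isClosed_eq (continuous_apply _) continuous_const) (by
      intro u
      by_contra hne
      rw [Set.not_nonempty_iff_eq_empty] at hne
      apply hc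
      let L := u.toList.map Subtype.val
      have hL : ∀ t ∈ L, t ∈ T' := by
        intro t ht
        simp only [L, List.mem_map] at ht
        obtain ⟨a, _, rfl⟩ := ht
        exact a.2
      let l := L.filter (fun t => t ∈ T)
      let m := L.filter (fun t => GLPProof Set.univ t)
      have hl : ∀ t ∈ l, t ∈ T := by
        intro t ht
        simpa using (List.mem_filter.1 ht).2
      have hm : ∀ t ∈ m, GLPProof Set.univ t := by
        intro t ht
        simpa using (List.mem_filter.1 ht).2
      refine ⟨l, hl, ?_⟩
      refine .mp (φ := listConj m) (.taut (Set.subset_univ _) ?_) (prove_listConj m hm)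
      intro v h1 h2 h3 h4
      have hB : BVal v := ⟨h1, h2, h3, h4⟩
      by_contra hv
      simp only [h4, Bool.or_eq_true, Bool.not_eq_true', not_or, Bool.not_eq_false,
        Bool.not_eq_true] at hv
      obtain ⟨hvm, hvl, hvc⟩ := hv
      rw [hB.listConj] at hvm hvl
      have : v ∈ ({v | BVal v} ∩ ⋂ i ∈ u, {v : GLPFormula → Bool | v i.1 = true}) := by
        refine ⟨hB, ?_⟩
        simp only [Set.mem_iInter]
        intro i hi
        have hiL : i.1 ∈ L := by
          simp only [L, List.mem_map]
          exact ⟨i, by simpa using hi, rfl⟩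
        rcases i.2 with h | h | h
        · exact hvm _ (List.mem_filter.2 ⟨hiL, by simpa using h⟩)
        · exact hvl _ (List.mem_filter.2 ⟨hiL, by simpa using h⟩)
        · show v i.1 = true
          rw [h, h2, hvc]; rfl
      rw [hne] at this
      exact this)
  obtain ⟨v, hB, hv⟩ := key
  simp only [Set.mem_iInter] at hv
  have h1 := h v ⟨hB, fun t ht => hv ⟨t, Or.inl ht⟩⟩ (fun t ht => hv ⟨t, Or.inr (Or.inl ht)⟩)
  have h2 : v χ.neg = true := hv ⟨χ.neg, Or.inr (Or.inr rfl)⟩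
  rw [hB.2.1, h1] at h2
  exact Bool.noConfusion h2

theorem compl0 (χ : GLPFormula) (h : ∀ v, WVal v → v χ = true) : GLPProof Set.univ χ := by
  obtain ⟨l, hl, hp⟩ := compl ∅ χ (fun v hv _ => h v hv)
  exact .mp hp (prove_listConj l (fun t ht => absurd (hl t ht) (Set.notMem_empty t)))

theorem compl_imp (a b : GLPFormula) (h : ∀ v, WVal v → v a = true → v b = true) :
    GLPProof Set.univ (a.imp b) := by
  refine compl0 _ fun v hv => ?_
  have := h v hv
  rw [hv.1.2.2.2]
  cases ha : v a <;> simp_all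

theorem WVal.imp {v : GLPFormula → Bool} (hv : WVal v) {a b : GLPFormula}
    (h : GLPProof Set.univ (a.imp b)) (ha : v a = true) : v b = true := by
  have := hv.2 _ h
  rw [hv.1.2.2.2, ha] at this
  simpa using this

theorem box_mono {ξ : Ordinal} {a b : GLPFormula}
    (h : ∀ v, WVal v → v a = true → v b = true) {v : GLPFormula → Bool} (hv : WVal v)
    (ha : v (.box ξ a) = true) : v (.box ξ b) = true :=
  hv.imp (.mp (.distr trivial (Set.subset_univ _) (Set.subset_univ _))
    (.nec trivial (compl_imp a b h))) ha

theorem box_mono2 {ξ : Ordinal} {a b c : GLPFormula}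
    (h : ∀ v, WVal v → v a = true → v b = true → v c = true) {v : GLPFormula → Bool} (hv : WVal v)
    (ha : v (.box ξ a) = true) (hb : v (.box ξ b) = true) : v (.box ξ c) = true := by
  have h1 : v (.box ξ (b.imp c)) = true := by
    refine box_mono (fun w hw h1 => ?_) hv ha
    have := h w hw h1
    rw [hw.1.2.2.2]
    cases hb : w b <;> simp_all
  have h2 := hv.imp (.distr trivial (Set.subset_univ _) (Set.subset_univ _)) h1
  rw [hv.1.2.2.2, hb] at h2
  simpa using h2

theorem dia_mono {ξ : Ordinal} {a b : GLPFormula}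
    (h : ∀ v, WVal v → v a = true → v b = true) {v : GLPFormula → Bool} (hv : WVal v)
    (ha : v (.dia ξ a) = true) : v (.dia ξ b) = true := by
  by_contra hb
  rw [hv.1.dia] at ha hb
  have : v (.box ξ a.neg) = true := by
    refine box_mono (a := b.neg) (fun w hw h1 => ?_) hv (by simpa using hb)
    have := h w hw
    rw [hw.1.2.1] at h1 ⊢
    cases ha : w a <;> simp_all
  simp [this] at ha

/-- `[ξ]a ∧ ⟨ξ⟩b → ⟨ξ⟩c` when `a ∧ b → c`. -/
theorem box_dia {ξ : Ordinal} {a b c : GLPFormula}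
    (h : ∀ v, WVal v → v a = true → v b = true → v c = true) {v : GLPFormula → Bool} (hv : WVal v)
    (ha : v (.box ξ a) = true) (hb : v (.dia ξ b) = true) : v (.dia ξ c) = true := by
  by_contra hc
  rw [hv.1.dia] at hb hc
  have : v (.box ξ b.neg) = true := by
    refine box_mono2 (b := c.neg) (fun w hw h1 h2 => ?_) hv ha (by simpa using hc)
    have := h w hw h1
    rw [hw.1.2.1] at h2 ⊢
    cases hb : w b <;> simp_all
  simp [this] at hb

theorem box_trans {ξ : Ordinal} {a : GLPFormula} {v : GLPFormula → Bool} (hv : WVal v)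
    (ha : v (.box ξ a) = true) : v (.box ξ (.box ξ a)) = true :=
  hv.imp (.trans trivial (Set.subset_univ _)) ha

theorem dia_trans {ξ : Ordinal} {a : GLPFormula} {v : GLPFormula → Bool} (hv : WVal v)
    (ha : v (.dia ξ (.dia ξ a)) = true) : v (.dia ξ a) = true := by
  by_contra hb
  rw [hv.1.dia] at ha hb
  have : v (.box ξ (GLPFormula.dia ξ a).neg) = true := by
    refine box_mono (a := .box ξ a.neg) (fun w hw h1 => ?_) hv (box_trans hv (by simpa using hb))
    rw [hw.1.2.1, hw.1.dia, h1]; rfl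
  simp [this] at ha

theorem dia_bot {ξ : Ordinal} {a : GLPFormula} {v : GLPFormula → Bool} (hv : WVal v)
    (h : ∀ w, WVal w → w a = false) : v (.dia ξ a) = false := by
  have : v (.box ξ a.neg) = true :=
    hv.2 _ (.nec trivial (compl0 _ fun w hw => by rw [hw.1.2.1, h w hw]; rfl))
  rw [hv.1.dia, this]; rfl

/-- Disjunction of `χ ∧ [n]¬χ` over the list. -/
def failDisj (n : Ordinal) : List GLPFormula → GLPFormula
  | [] => GLPFormula.top.neg
  | χ :: l => (GLPFormula.and (χ.imp (.dia n χ)) (failDisj n l).neg).neg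

theorem failDisj_iff {n : Ordinal} {v : GLPFormula → Bool} (hv : WVal v) (l : List GLPFormula) :
    v (failDisj n l) = true ↔ ∃ χ ∈ l, v χ = true ∧ v (.dia n χ) = false := by
  induction l with
  | nil => simp [failDisj, hv.1.2.1, hv.1.1]
  | cons a l ih =>
    simp only [failDisj, hv.1.2.1, hv.1.2.2.1, hv.1.2.2.2, List.mem_cons, exists_eq_or_imp, ← ih]
    cases v a <;> cases v (.dia n a) <;> cases v (failDisj n l) <;> simp

theorem Q_fail (n : Ordinal) (φ : GLPFormula) (j : ℕ) :
    ∀ L : List GLPFormula, L.length = j → ∀ v, WVal v →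
      v (.box n (φ.imp (failDisj n L))) = true → v (Q n (j + 1) φ) = false := by
  classical
  induction j with
  | zero =>
    intro L hL v hv h
    by_contra hq
    rw [Bool.not_eq_false] at hq
    have := box_dia (c := GLPFormula.top.neg) (fun w hw h1 h2 => ?_) hv h hq
    · rw [dia_bot hv (fun w hw => by rw [hw.1.2.1, hw.1.1]; rfl)] at this
      simp at this
    · rw [hw.1.2.2.1] at h2
      rw [hw.1.2.2.2] at h1
      have h3 : w (failDisj n L) = true := by
        cases hh : w φ <;> simp_all
      rw [failDisj_iff hw, List.length_eq_zero_iff.1 hL] at h3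
      simp at h3
  | succ j ih =>
    intro L hL v hv h
    by_contra hq
    rw [Bool.not_eq_false] at hq
    have hand : v (.box n ((φ.imp (failDisj n L)).and (.box n (φ.imp (failDisj n L))))) = true :=
      box_mono2 (fun w hw h1 h2 => by rw [hw.1.2.2.1, h1, h2]; rfl) hv h (box_trans hv h)
    have := box_dia (c := GLPFormula.top.neg) (fun w hw h1 h2 => ?_) hv hand hq
    · rw [dia_bot hv (fun w hw => by rw [hw.1.2.1, hw.1.1]; rfl)] at this
      simp at this
    · exfalso
      rw [hw.1.2.2.1, Bool.and_eq_true] at h1 h2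
      obtain ⟨h3, h4⟩ := h1
      obtain ⟨h5, h6⟩ := h2
      rw [hw.1.2.2.2, h5] at h3
      obtain ⟨χ, hχ, h7, h8⟩ := (failDisj_iff hw L).1 (by simpa using h3)
      have h9 : w (.box n χ.neg) = true := by
        rw [hw.1.dia] at h8; simpa using h8
      have h10 := ih (L.erase χ) (by rw [List.length_erase_of_mem hχ, hL]; rfl) w hw
        (box_mono2 (fun x hx g1 g2 => ?_) hw h4 h9)
      · rw [h10] at h6
        simp at h6
      · rw [hx.1.2.2.2] at g1 ⊢
        rw [hx.1.2.1] at g2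
        cases hxφ : x φ
        · rfl
        · rw [hxφ] at g1
          obtain ⟨θ, hθ, g3, g4⟩ := (failDisj_iff hx L).1 (by simpa using g1)
          have hne : θ ≠ χ := by
            rintro rfl
            rw [g3] at g2
            simp at g2
          simpa using (failDisj_iff hx (L.erase χ)).2
            ⟨θ, (List.mem_erase_of_ne hne).2 hθ, g3, g4⟩

open Classical in
/-- Truth at the new point `y` added below the reflexive point `v`. -/
noncomputable def newPt (v : GLPFormula → Bool) (n : Ordinal) : GLPFormula → Bool
  | .var _ => true
  | .top => true
  | .neg a => !newPt v n a
  | .and a b => newPt v n a && newPt v n b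
  | .imp a b => !newPt v n a || newPt v n b
  | .box m a => if m ≤ n then v (.box m a) else
      if m = n + 1 then v a && v (.box m a) else true

theorem newPt_sound (v : GLPFormula → Bool) (n : Ordinal) (hv : WVal v)
    (hr : ∀ χ, v χ = true → v (.dia n χ) = true) (φ : GLPFormula) (h : GLPProof Set.univ φ) :
    newPt v n φ = true := by
  have lo : ∀ m a, m ≤ n → newPt v n (.box m a) = v (.box m a) := by
    intro m a hm; simp [newPt, hm]
  have mid : ∀ a, newPt v n (.box (n + 1) a) = (v a && v (.box (n + 1) a)) := by
    intro a
    have : ¬ (n + 1 ≤ n) := not_le.2 (Order.lt_add_one_iff.2 le_rfl)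
    simp [newPt, this]
  have hi : ∀ m a, ¬ m ≤ n → m ≠ n + 1 → newPt v n (.box m a) = true := by
    intro m a h1 h2; simp [newPt, h1, h2]
  have loD : ∀ m a, m ≤ n → newPt v n (.dia m a) = v (.dia m a) := by
    intro m a hm
    rw [hv.1.dia, ← lo _ _ hm]; rfl
  have hneg : ∀ a, newPt v n a.neg = !newPt v n a := fun a => rfl
  have himp : ∀ a b, newPt v n (.imp a b) = (!newPt v n a || newPt v n b) := fun a b => rfl
  have hD : ∀ m a, newPt v n (.dia m a) = !newPt v n (.box m a.neg) := fun a b => rfl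
  induction h with
  | taut _ ht => exact ht _ rfl (fun _ => rfl) (fun _ _ => rfl) (fun _ _ => rfl)
  | @distr ξ a b _ _ _ =>
    have ax := hv.2 _ (.distr (ξ := ξ) (φ := a) (ψ := b) trivial (Set.subset_univ _) (Set.subset_univ _))
    by_cases h1 : ξ ≤ n
    · simpa only [himp, lo _ _ h1, hv.1.2.2.2] using ax
    by_cases h2 : ξ = n + 1
    · subst h2
      simp only [himp, mid, hv.1.2.2.2] at ax ⊢
      generalize v (.box (n + 1) (a.imp b)) = x1 at *
      generalize v (.box (n + 1) a) = x2 at *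
      generalize v (.box (n + 1) b) = x3 at *
      generalize v a = x4 at *
      generalize v b = x5 at *
      revert ax
      clear * -
      revert x1 x2 x3 x4 x5
      decide
    · simp [himp, hi _ _ h1 h2]
  | @trans ξ a _ _ =>
    have ax := hv.2 _ (.trans (ξ := ξ) (φ := a) trivial (Set.subset_univ _))
    by_cases h1 : ξ ≤ n
    · simpa only [himp, lo _ _ h1, hv.1.2.2.2] using ax
    by_cases h2 : ξ = n + 1
    · subst h2
      simp only [himp, mid, hv.1.2.2.2] at ax ⊢
      cases h3 : v (.box (n + 1) a) <;> simp_all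
    · simp [himp, hi _ _ h1 h2]
  | @lob ξ a _ _ =>
    have ax := hv.2 _ (.lob (ξ := ξ) (φ := a) trivial (Set.subset_univ _))
    by_cases h1 : ξ ≤ n
    · simpa only [himp, lo _ _ h1, hv.1.2.2.2] using ax
    by_cases h2 : ξ = n + 1
    · subst h2
      simp only [himp, mid, hv.1.2.2.2] at ax ⊢
      cases h3 : v (.box (n + 1) a) <;> cases h4 : v a <;> simp_all
    · simp [himp, hi _ _ h1 h2]
  | @negIntro ξ ζ a hlt _ _ _ =>
    have ax := hv.2 _ (.negIntro (φ := a) hlt trivial trivial (Set.subset_univ _))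
    by_cases h1 : ζ ≤ n
    · simpa only [himp, loD _ _ h1, loD _ _ (hlt.le.trans h1), hv.1.2.2.2] using ax
    by_cases h2 : ζ = n + 1
    · subst h2
      have hξ : ξ ≤ n := Order.lt_add_one_iff.1 hlt
      have h4 : v a = true → v (.dia ξ a) = true := by
        intro h
        rcases hξ.lt_or_eq with h5 | h5
        · exact hv.imp (.negIntro h5 trivial trivial (Set.subset_univ _)) (hr a h)
        · rw [h5]; exact hr a h
      rw [himp, loD _ _ hξ, hD, mid]
      rw [hv.1.2.2.2, hv.1.dia] at ax
      rw [hv.1.2.1]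
      cases h5 : v a <;> cases h6 : v (.dia ξ a) <;> simp_all
    · simp [himp, hD, hi _ _ h1 h2]
  | @mono ξ ζ a hlt _ _ _ =>
    have ax := hv.2 _ (.mono (φ := a) hlt trivial trivial (Set.subset_univ _))
    by_cases h1 : ζ ≤ n
    · simpa only [himp, lo _ _ h1, loD _ _ (hlt.le.trans h1), hv.1.2.2.2] using ax
    by_cases h2 : ζ = n + 1
    · subst h2
      have hξ : ξ ≤ n := Order.lt_add_one_iff.1 hlt
      rw [himp, loD _ _ hξ, mid]
      rw [hv.1.2.2.2] at ax
      cases h6 : v (.dia ξ a) <;> simp_all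
    · simp [himp, hi _ _ h1 h2]
  | mp _ _ ih1 ih2 =>
    rw [himp, ih2] at ih1
    simpa using ih1
  | @nec ξ a _ hp _ =>
    have g1 := hv.2 _ hp
    have g2 := hv.2 _ (.nec (ξ := ξ) trivial hp)
    by_cases h1 : ξ ≤ n
    · rw [lo _ _ h1, g2]
    by_cases h2 : ξ = n + 1
    · subst h2
      rw [mid, g1, g2]; rfl
    · exact hi _ _ h1 h2

theorem dia_succ_Q (n : Ordinal) (φ : GLPFormula) (k : ℕ) {v : GLPFormula → Bool} (hv : WVal v)
    (h : v (.dia (n + 1) φ) = true) : v (Q n k φ) = true := by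
  have hlt : n < n + 1 := Order.lt_add_one_iff.2 le_rfl
  induction k with
  | zero => exact hv.1.1
  | succ k ih =>
    have hb : v (.box (n + 1) (Q n k φ)) = true := by
      cases k with
      | zero => exact hv.2 _ (.nec trivial (compl0 _ fun w hw => hw.1.1))
      | succ k => exact hv.imp (.mono hlt trivial trivial (Set.subset_univ _)) ih
    have h2 : v (.dia (n + 1) (φ.and (Q n k φ))) = true :=
      box_dia (fun w hw h1 h2 => by rw [hw.1.2.2.1, h1, h2]; rfl) hv hb h
    exact hv.imp (.negIntro hlt trivial trivial (Set.subset_univ _)) h2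

/-- Algebraic reduction property: `⟨n+1⟩φ` is `n`-conservative over `{Q_n^k(φ) : k < ω}`. -/
theorem algebraic_reduction_property (n : ℕ) (φ : GLPFormula) (hφ : IsOmegaFormula φ)
    (ψ : GLPFormula) (hψ : IsOmegaFormula ψ) :
    GLPProves ((GLPFormula.dia ((n : Ordinal) + 1) φ).imp (GLPFormula.dia (n : Ordinal) ψ)) ↔
      SetProves Set.univ {χ | ∃ k : ℕ, χ = Q (n : Ordinal) k φ}
        (GLPFormula.dia (n : Ordinal) ψ) := by
  generalize (n : Ordinal) = n
  constructor
  · intro h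
    obtain ⟨l, hl, hp⟩ := compl {t | ∃ χ : GLPFormula, t = χ.imp (.dia n χ)}
      (φ.imp (.dia n ψ)) (by
        intro v hv hT
        have hr : ∀ χ, v χ = true → v (.dia n χ) = true := by
          intro χ hχ
          have := hT _ ⟨χ, rfl⟩
          rw [hv.1.2.2.2, hχ] at this
          simpa using this
        have hs := newPt_sound v n hv hr _ h
        have hlt : ¬ (n + 1 ≤ n) := not_le.2 (Order.lt_add_one_iff.2 le_rfl)
        rw [hv.1.2.2.2, hv.1.dia]
        simp only [GLPFormula.dia, newPt, hlt, le_refl, if_true, if_false, hv.1.2.1] at hs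
        cases h1 : v φ <;> cases h2 : v (.box n ψ.neg) <;> simp_all)
    have : ∃ L : List GLPFormula, ∀ t ∈ l, ∃ χ ∈ L, t = χ.imp (.dia n χ) := by
      clear hp
      induction l with
      | nil => exact ⟨[], by simp⟩
      | cons a l ih =>
        obtain ⟨L, hL⟩ := ih (fun t ht => hl t (by simp [ht]))
        obtain ⟨χ, hχ⟩ := hl a (by simp)
        refine ⟨χ :: L, fun t ht => ?_⟩
        rcases List.mem_cons.1 ht with rfl | ht
        · exact ⟨χ, by simp, hχ⟩
        · obtain ⟨θ, h1, h2⟩ := hL t ht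
          exact ⟨θ, by simp [h1], h2⟩
    obtain ⟨L, hL⟩ := this
    refine compl _ _ fun v hv hT => ?_
    have hQ := hT _ ⟨L.length + 1, rfl⟩
    by_contra hc
    have hbox : v (.box n (GLPFormula.dia n ψ).neg) = true := by
      by_contra hb
      apply hc
      apply dia_trans hv
      rw [hv.1.dia]
      simpa using hb
    rw [Q_fail n φ L.length L rfl v hv] at hQ
    · simp at hQ
    · refine box_mono (fun w hw h1 => ?_) hv hbox
      rw [hw.1.2.2.2]
      cases hwφ : w φ
      · rfl
      · suffices hs : w (failDisj n L) = true by rw [hs]; rfl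
        by_contra hf
        rw [failDisj_iff hw] at hf
        push Not at hf
        have hl1 : w (listConj l) = true := by
          rw [hw.1.listConj]
          intro t ht
          obtain ⟨χ, hχ, rfl⟩ := hL t ht
          have := hf χ hχ
          rw [hw.1.2.2.2]
          cases h3 : w χ <;> simp_all
        have := hw.imp hp hl1
        rw [hw.1.2.2.2, hwφ] at this
        rw [hw.1.2.1] at h1
        simp_all
  · rintro ⟨l, hl, hp⟩
    refine compl_imp _ _ fun v hv h => ?_
    refine hv.imp hp ((hv.1.listConj l).2 fun t ht => ?_)
    obtain ⟨k, rfl⟩ := hl t ht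
    exact dia_succ_Q n φ k hv h
end

section
/- Let A and B be GLP_ω formulas and n a natural number. If A ≡_n B and A ⊢_GLP ⟨n⟩⊤, then A ≡_j B for every natural number j ≤ n. -/
/-- `n`-conservativity of two GLP_ω formulas: they prove the same `⟨n⟩`-formulas. -/
def ConservEq (n : ℕ) (A B : GLPFormula) : Prop :=
  ∀ φ : GLPFormula, IsOmegaFormula φ →
    (GLPProves (A.imp (GLPFormula.dia (n : Ordinal) φ)) ↔
      GLPProves (B.imp (GLPFormula.dia (n : Ordinal) φ)))

/-- Local reasoning: propositional consequence of one implication. -/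
theorem glp_taut {φ : GLPFormula} (h : IsTautology φ) : GLPProves φ :=
  GLPProof.taut (Set.subset_univ _) h

theorem glp_imp_trans {φ ψ χ : GLPFormula} (h₁ : GLPProves (φ.imp ψ))
    (h₂ : GLPProves (ψ.imp χ)) : GLPProves (φ.imp χ) := by
  have t : GLPProves ((φ.imp ψ).imp ((ψ.imp χ).imp (φ.imp χ))) := by
    apply glp_taut
    intro v _ _ _ hi
    simp only [hi]
    cases v φ <;> cases v ψ <;> cases v χ <;> rfl
  exact GLPProof.mp (GLPProof.mp t h₁) h₂

theorem glp_box_mono {ξ : Ordinal} {φ ψ : GLPFormula} (h : GLPProves (φ.imp ψ)) :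
    GLPProves ((GLPFormula.box ξ φ).imp (GLPFormula.box ξ ψ)) :=
  GLPProof.mp (GLPProof.distr trivial (Set.subset_univ _) (Set.subset_univ _))
    (GLPProof.nec trivial h)

theorem glp_contra {φ ψ : GLPFormula} (h : GLPProves (φ.imp ψ)) :
    GLPProves (ψ.neg.imp φ.neg) := by
  have t : GLPProves ((φ.imp ψ).imp (ψ.neg.imp φ.neg)) := by
    apply glp_taut
    intro v _ hn _ hi
    simp only [hi, hn]
    cases v φ <;> cases v ψ <;> rfl
  exact GLPProof.mp t h

/-- `⟨ξ⟩⟨ξ⟩φ → ⟨ξ⟩φ`. -/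
theorem glp_dia_dia (ξ : Ordinal) (φ : GLPFormula) :
    GLPProves ((GLPFormula.dia ξ (GLPFormula.dia ξ φ)).imp (GLPFormula.dia ξ φ)) := by
  apply glp_contra
  refine glp_imp_trans (GLPProof.trans trivial (Set.subset_univ _)) (glp_box_mono ?_)
  apply glp_taut
  intro v _ hn _ hi
  simp only [GLPFormula.dia, hi, hn]
  cases v (GLPFormula.box ξ φ.neg) <;> rfl

/-- From `[ξ]ψ` and `⟨ξ⟩⊤` infer `⟨ξ⟩ψ`. -/
theorem glp_box_dia (ξ : Ordinal) (ψ A : GLPFormula)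
    (h₁ : GLPProves (A.imp (GLPFormula.box ξ ψ)))
    (h₂ : GLPProves (A.imp (GLPFormula.dia ξ GLPFormula.top))) :
    GLPProves (A.imp (GLPFormula.dia ξ ψ)) := by
  have a : GLPProves ((GLPFormula.box ξ ψ).imp
      (GLPFormula.box ξ (ψ.neg.imp GLPFormula.top.neg))) := by
    apply glp_box_mono
    apply glp_taut
    intro v _ hn _ hi
    simp only [hi, hn]
    cases v ψ <;> rfl
  have b : GLPProves ((GLPFormula.box ξ (ψ.neg.imp GLPFormula.top.neg)).imp
      ((GLPFormula.box ξ ψ.neg).imp (GLPFormula.box ξ GLPFormula.top.neg))) :=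
    GLPProof.distr trivial (Set.subset_univ _) (Set.subset_univ _)
  have c := glp_imp_trans h₁ (glp_imp_trans a b)
  refine GLPProof.mp (GLPProof.mp (glp_taut ?_) c) h₂
  intro v _ hn _ hi
  simp only [GLPFormula.dia, hi, hn]
  cases v A <;> cases v (GLPFormula.box ξ ψ.neg) <;>
    cases v (GLPFormula.box ξ GLPFormula.top.neg) <;> rfl

theorem glp_descend_aux (A B : GLPFormula) (n : ℕ) (h : ConservEq n A B)
    (hcons : GLPProves (A.imp (GLPFormula.dia (n : Ordinal) GLPFormula.top)))
    (j : ℕ) (hj : j < n) (φ : GLPFormula) (hφ : IsOmegaFormula φ)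
    (hp : GLPProves (A.imp (GLPFormula.dia (j : Ordinal) φ))) :
    GLPProves (B.imp (GLPFormula.dia (j : Ordinal) φ)) := by
  have hlt : (j : Ordinal) < (n : Ordinal) := by exact_mod_cast hj
  have hω : IsOmegaFormula (GLPFormula.dia (j : Ordinal) φ) := by
    intro x hx
    simp only [GLPFormula.dia, GLPFormula.mods, Set.mem_insert_iff] at hx
    rcases hx with rfl | hx
    · exact Ordinal.natCast_lt_omega0 j
    · exact hφ hx
  have h1 := glp_box_dia (n : Ordinal) (GLPFormula.dia (j : Ordinal) φ) A
    (glp_imp_trans hp (GLPProof.mono hlt trivial trivial (Set.subset_univ _))) hcons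
  have h2 := (h _ hω).1 h1
  exact glp_imp_trans h2 (glp_imp_trans
    (GLPProof.negIntro hlt trivial trivial (Set.subset_univ _)) (glp_dia_dia _ _))

/-- If `A ≡_n B` and `A ⊢ ⟨n⟩⊤`, then `A ≡_j B` for every `j ≤ n`. -/
theorem conservativity_descends (A B : GLPFormula) (hA : IsOmegaFormula A)
    (hB : IsOmegaFormula B) (n : ℕ) (h : ConservEq n A B)
    (hcons : GLPProves (A.imp (GLPFormula.dia (n : Ordinal) GLPFormula.top)))
    (j : ℕ) (hj : j ≤ n) : ConservEq j A B := by
  rcases Nat.lt_or_eq_of_le hj with hlt | rfl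
  · have htop : IsOmegaFormula GLPFormula.top := by
      intro x hx
      exact absurd hx (Set.notMem_empty x)
    have hconsB := (h _ htop).1 hcons
    have h' : ConservEq n B A := fun φ hφ => (h φ hφ).symm
    exact fun φ hφ => ⟨glp_descend_aux A B n h hcons j hlt φ hφ,
      glp_descend_aux B A n h' hconsB j hlt φ hφ⟩
  · exact h
end

section
/- (Π_j-consequences, algebraic version) For all natural numbers j ≤ n and every GLP_ω formula φ, the formula ⟨n+1⟩φ is j-conservative over the set { ⟨j⟩(φ ∧ Q_n^k(φ)) : k < ω }; that is, for every formula ψ, ⟨n+1⟩φ ⊢_GLP ⟨j⟩ψ if and only if { ⟨j⟩(φ ∧ Q_n^k(φ)) : k < ω } ⊢_GLP ⟨j⟩ψ. -/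
set_option linter.unusedSimpArgs false

namespace GLPAux

open GLPFormula

abbrev Pr (φ : GLPFormula) : Prop := GLPProof Set.univ φ

theorem tt {φ : GLPFormula} (h : IsTautology φ) : Pr φ := .taut (Set.subset_univ _) h

theorem t1 {a b : GLPFormula} (h : IsTautology (a.imp b)) (ha : Pr a) : Pr b := .mp (tt h) ha

theorem t2 {a b c : GLPFormula} (h : IsTautology (a.imp (b.imp c))) (ha : Pr a) (hb : Pr b) :
    Pr c := .mp (t1 h ha) hb

theorem t3 {a b c d : GLPFormula} (h : IsTautology (a.imp (b.imp (c.imp d)))) (ha : Pr a)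
    (hb : Pr b) (hc : Pr c) : Pr d := .mp (t2 h ha hb) hc

theorem syll {a b c : GLPFormula} (h1 : Pr (a.imp b)) (h2 : Pr (b.imp c)) : Pr (a.imp c) :=
  t2 (by intro v h0 hn ha hi; simp only [hi, hn, ha]; grind) h1 h2

theorem box_mono {ξ : Ordinal} {a b : GLPFormula} (h : Pr (a.imp b)) :
    Pr ((box ξ a).imp (box ξ b)) :=
  .mp (.distr trivial (Set.subset_univ _) (Set.subset_univ _)) (.nec trivial h)

theorem dia_mono {ξ : Ordinal} {a b : GLPFormula} (h : Pr (a.imp b)) :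
    Pr ((dia ξ a).imp (dia ξ b)) := by
  have h1 : Pr (b.neg.imp a.neg) :=
    t1 (by intro v h0 hn ha hi; simp only [hi, hn, ha]; grind) h
  exact t1 (by intro v h0 hn ha hi; simp only [hi, hn, ha, dia]; grind) (box_mono (ξ := ξ) h1)

theorem box_and {ξ : Ordinal} {a b : GLPFormula} :
    Pr ((box ξ a).imp ((box ξ b).imp (box ξ (a.and b)))) := by
  have h1 : Pr (a.imp (b.imp (a.and b))) :=
    tt (by intro v h0 hn ha hi; simp only [hi, hn, ha]; grind)
  exact syll (box_mono (ξ := ξ) h1) (.distr trivial (Set.subset_univ _) (Set.subset_univ _))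

/-- `[ξ]a ∧ ⟨ξ⟩b → ⟨ξ⟩(a ∧ b)` -/
theorem box_dia {ξ : Ordinal} {a b : GLPFormula} :
    Pr ((box ξ a).imp ((dia ξ b).imp (dia ξ (b.and a)))) := by
  have h1 : Pr (a.imp ((b.and a).neg.imp b.neg)) :=
    tt (by intro v h0 hn ha hi; simp only [hi, hn, ha]; grind)
  have h2 : Pr ((box ξ a).imp ((box ξ (b.and a).neg).imp (box ξ b.neg))) :=
    syll (box_mono (ξ := ξ) h1) (.distr trivial (Set.subset_univ _) (Set.subset_univ _))
  exact t1 (by intro v h0 hn ha hi; simp only [hi, hn, ha, dia]; grind) h2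

theorem box_trans {ξ : Ordinal} {a : GLPFormula} : Pr ((box ξ a).imp (box ξ (box ξ a))) :=
  .trans trivial (Set.subset_univ _)

/-- box form of negative introspection -/
theorem box_up {ξ ζ : Ordinal} (h : ξ ≤ ζ) {a : GLPFormula} :
    Pr ((box ξ a).imp (box ζ a)) := by
  rcases h.eq_or_lt with rfl | h
  · exact tt (by intro v h0 hn ha hi; simp only [hi]; grind)
  have h1 : Pr ((dia ζ a.neg).imp (dia ξ a.neg)) :=
    .negIntro h trivial trivial (Set.subset_univ _)
  have h2 : Pr ((box ξ a).imp (box ξ a.neg.neg)) :=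
    box_mono (tt (by intro v h0 hn ha hi; simp only [hi, hn]; grind))
  have h3 : Pr ((box ζ a.neg.neg).imp (box ζ a)) :=
    box_mono (tt (by intro v h0 hn ha hi; simp only [hi, hn]; grind))
  exact t3 (by intro v h0 hn ha hi; simp only [hi, hn, dia]; grind) h1 h2 h3

theorem dia_trans {ξ : Ordinal} {a : GLPFormula} : Pr ((dia ξ (dia ξ a)).imp (dia ξ a)) := by
  have h3 : Pr ((box ξ (box ξ a.neg)).imp (box ξ (box ξ a.neg).neg.neg)) :=
    box_mono (tt (by intro v h0 hn ha hi; simp only [hi, hn]; grind))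
  exact t2 (by intro v h0 hn ha hi; simp only [hi, hn, dia]; grind) (box_trans (ξ := ξ) (a := a.neg)) h3

/-! ### Evaluation at a fresh root placed above a point -/

open Classical in
/-- Evaluation at a fresh root `r` whose only immediate `n+1`-successor is the current point. -/
noncomputable def up (n : Ordinal) : GLPFormula → GLPFormula
  | var i => var i
  | top => top
  | neg φ => neg (up n φ)
  | GLPFormula.and φ ψ => GLPFormula.and (up n φ) (up n ψ)
  | imp φ ψ => imp (up n φ) (up n ψ)
  | box ξ φ => if ξ ≤ n then box ξ φ else if ξ = n + 1 then GLPFormula.and φ (box ξ φ) else top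

/-- Finite reflection. -/
def refl (n : Ordinal) (L : List GLPFormula) : GLPFormula :=
  listConj (L.map fun θ => (box n θ).imp θ)

theorem conj_append (L M : List GLPFormula) :
    Pr ((listConj (L ++ M)).imp ((listConj L).and (listConj M))) := by
  apply tt
  intro v h0 hn ha hi
  have : v (listConj (L ++ M)) = (v (listConj L) && v (listConj M)) := by
    induction L with
    | nil => simp [listConj, h0]
    | cons a L ih => simp [listConj, ha, ih, Bool.and_assoc]
  simp only [hi, ha, this]; grind

theorem refl_append (n : Ordinal) (L M : List GLPFormula) :
    Pr ((refl n (L ++ M)).imp ((refl n L).and (refl n M))) := by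
  unfold refl
  rw [List.map_append]
  exact conj_append _ _

theorem weaken {a b : GLPFormula} (h : Pr b) : Pr (a.imp b) :=
  t1 (by intro v h0 hn ha hi; simp only [hi]; grind) h

theorem up_taut (n : Ordinal) {φ : GLPFormula} (h : IsTautology φ) : Pr (up n φ) := by
  apply tt
  intro v h0 hn ha hi
  exact h (fun θ => v (up n θ)) (by simp [up, h0]) (by simp [up, hn]) (by simp [up, ha])
    (by simp [up, hi])

theorem up_sound (n : Ordinal) {φ : GLPFormula} (h : Pr φ) :
    ∃ L, Pr ((refl n L).imp (up n φ)) := by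
  have hlt : ¬ (n + 1 ≤ n) := by simp
  induction h with
  | taut _ h => exact ⟨[], weaken (up_taut n h)⟩
  | @distr ξ a b _ _ _ =>
    refine ⟨[], weaken ?_⟩
    have := GLPProof.distr (S := Set.univ) (ξ := ξ) (φ := a) (ψ := b) trivial
      (Set.subset_univ _) (Set.subset_univ _)
    simp only [up]
    split_ifs
    · exact this
    · exact t1 (by intro v h0 hn ha hi; simp only [hi, hn, ha]; grind) this
    · exact tt (by intro v h0 hn ha hi; simp only [hi, hn, ha]; grind)
  | @trans ξ a _ _ =>
    refine ⟨[], weaken ?_⟩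
    have := box_trans (ξ := ξ) (a := a)
    simp only [up]
    split_ifs
    · exact this
    · exact t1 (by intro v h0 hn ha hi; simp only [hi, hn, ha]; grind) this
    · exact tt (by intro v h0 hn ha hi; simp only [hi, hn, ha]; grind)
  | @lob ξ a _ _ =>
    refine ⟨[], weaken ?_⟩
    have := GLPProof.lob (S := Set.univ) (ξ := ξ) (φ := a) trivial (Set.subset_univ _)
    simp only [up]
    split_ifs
    · exact this
    · exact t1 (by intro v h0 hn ha hi; simp only [hi, hn, ha]; grind) this
    · exact tt (by intro v h0 hn ha hi; simp only [hi, hn, ha]; grind)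
  | @negIntro ξ ζ a h _ _ _ =>
    refine ⟨[a.neg], ?_⟩
    simp only [up, dia, refl, List.map, listConj]
    by_cases h1 : ζ ≤ n
    · have h2 : ξ ≤ n := h.le.trans h1
      simp only [h1, h2, if_true]
      exact weaken (.negIntro h trivial trivial (Set.subset_univ _))
    · by_cases h3 : ζ = n + 1
      · subst h3
        have h2 : ξ ≤ n := Order.lt_add_one_iff.1 h
        simp only [hlt, h2, if_true, if_false]
        exact t2 (by intro v h0 hn ha hi; simp only [hi, hn, ha]; grind)
          (box_up h.le (a := a.neg)) (box_up h2 (a := a.neg))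
      · simp only [h1, h3, if_false]
        exact tt (by intro v h0 hn ha hi; simp only [hi, hn, ha, h0]; grind)
  | @mono ξ ζ a h _ _ _ =>
    refine ⟨[], weaken ?_⟩
    have := GLPProof.mono (S := Set.univ) (φ := a) h trivial trivial (Set.subset_univ _)
    simp only [up, dia] at this ⊢
    by_cases h1 : ζ ≤ n
    · have h2 : ξ ≤ n := h.le.trans h1
      simp only [h1, h2, if_true]
      exact this
    · by_cases h3 : ζ = n + 1
      · subst h3
        have h2 : ξ ≤ n := Order.lt_add_one_iff.1 h
        simp only [hlt, h2, if_true, if_false]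
        exact t1 (by intro v h0 hn ha hi; simp only [hi, hn, ha]; grind) this
      · simp only [h1, h3, if_false]
        exact tt (by intro v h0 hn ha hi; simp only [hi, hn, h0]; grind)
  | mp _ _ ih1 ih2 =>
    obtain ⟨L, hL⟩ := ih1
    obtain ⟨M, hM⟩ := ih2
    refine ⟨L ++ M, ?_⟩
    simp only [up] at hL
    exact t3 (by intro v h0 hn ha hi; simp only [hi, ha]; grind) (refl_append n L M) hL hM
  | @nec ξ a _ h _ =>
    refine ⟨[], weaken ?_⟩
    have h2 : Pr (box ξ a) := .nec trivial h
    simp only [up]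
    split_ifs
    · exact h2
    · exact t2 (by intro v h0 hn ha hi; simp only [hi, ha]; grind) h h2
    · exact tt (by intro v h0 hn ha hi; exact h0)

/-- Pigeonhole along the `n`-chain of `φ`-points. -/
theorem chain (n : Ordinal) (φ : GLPFormula) : ∀ (k : ℕ) (L : List GLPFormula), L.length = k →
    Pr (((φ.imp (refl n L).neg).and (box n (φ.imp (refl n L).neg))).imp
      (φ.and (Q n k φ)).neg) := by
  intro k
  induction k with
  | zero =>
    intro L hL
    obtain rfl := List.length_eq_zero_iff.1 hL
    exact tt (by intro v h0 hn ha hi; simp [hi, hn, ha, refl, listConj, h0]; cases v φ <;> simp)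
  | succ k ih =>
    intro L hL
    set X := φ.imp (refl n L).neg with hX
    -- each failing instance is impossible
    have key : ∀ θ ∈ L, Pr ((box n X).imp ((Q n (k + 1) φ).imp ((box n θ).imp θ))) := by
      intro θ hθ
      obtain ⟨A, B, rfl⟩ := List.append_of_mem hθ
      have ih' := ih (A ++ B) (by simp at hL ⊢; omega)
      have e1 : Pr ((X.and θ).imp (φ.imp (refl n (A ++ B)).neg)) := by
        apply tt
        intro v h0 hn ha hi
        have hc : ∀ l, v (listConj l) = l.all v := by
          intro l
          induction l with
          | nil => simp [listConj, h0]
          | cons a l ih => simp [listConj, ha, ih]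
        simp only [hX, hi, hn, ha, refl, hc, List.map_append, List.map_cons, List.all_append,
          List.all_cons]
        grind
      have e2 := box_mono (ξ := n) e1
      have e3 : Pr ((box n X).imp ((box n θ).imp (box n (φ.imp (refl n (A ++ B)).neg)))) :=
        t2 (by intro v h0 hn ha hi; simp only [hi]; grind) (box_and (ξ := n) (a := X) (b := θ)) e2
      have e4 := box_trans (ξ := n) (a := φ.imp (refl n (A ++ B)).neg)
      have e5 := box_and (ξ := n) (a := φ.imp (refl n (A ++ B)).neg)
        (b := box n (φ.imp (refl n (A ++ B)).neg))
      have e6 := box_mono (ξ := n) ih'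
      have e7 : Pr ((box n X).imp ((box n θ).imp (box n (φ.and (Q n k φ)).neg))) :=
        .mp (t3 (by intro v h0 hn ha hi; simp only [hi]; grind) e3 e4 e5) e6
      exact t1 (by intro v h0 hn ha hi; simp only [hi, hn, Q, dia]; grind) e7
    have key2 : ∀ M : List GLPFormula, (∀ θ ∈ M, θ ∈ L) →
        Pr ((box n X).imp ((Q n (k + 1) φ).imp (refl n M))) := by
      intro M
      induction M with
      | nil => intro _; exact tt (by intro v h0 hn ha hi; simp [hi, refl, listConj, h0])
      | cons θ M ihM =>
        intro hM
        have a1 := ihM (fun x hx => hM x (by simp [hx]))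
        have a2 := key θ (hM θ (by simp))
        simp only [refl, List.map_cons, listConj] at a1 ⊢
        exact t2 (by intro v h0 hn ha hi; simp only [hi, ha]; grind) a1 a2
    have := key2 L (fun _ h => h)
    exact t1 (by intro v h0 hn ha hi; simp only [hi, ha, hn, hX]; grind) this

theorem forward (j n : Ordinal) (hjn : j ≤ n) (φ ψ : GLPFormula)
    (h : Pr ((dia (n + 1) φ).imp (dia j ψ))) :
    ∃ k, Pr ((dia j (φ.and (Q n k φ))).imp (dia j ψ)) := by
  obtain ⟨L, hL⟩ := up_sound n h
  have hlt : ¬ (n + 1 ≤ n) := by simp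
  simp only [up, dia, hlt, hjn, if_true, if_false] at hL
  refine ⟨L.length, ?_⟩
  have h1 : Pr ((box j ψ.neg).imp (φ.imp (refl n L).neg)) :=
    t1 (by intro v h0 hn ha hi; simp only [hi, ha, hn]; grind) hL
  have h2 : Pr ((box j ψ.neg).imp (box n (φ.imp (refl n L).neg))) :=
    syll (syll box_trans (box_up hjn)) (box_mono h1)
  have h3 : Pr ((φ.and (Q n L.length φ)).imp (dia j ψ)) :=
    t3 (by intro v h0 hn ha hi; simp only [hi, ha, hn, dia]; grind) h1 h2 (chain n φ _ L rfl)
  exact syll (dia_mono h3) dia_trans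

theorem toQ (n : Ordinal) (φ : GLPFormula) (k : ℕ) :
    Pr ((dia (n + 1) φ).imp (dia (n + 1) (φ.and (Q n k φ)))) := by
  have hlt : n < n + 1 := Order.lt_add_one_iff.2 le_rfl
  induction k with
  | zero => exact dia_mono (tt (by intro v h0 hn ha hi; simp [hi, ha, Q, h0]))
  | succ k ih =>
    have h1 : Pr ((dia (n + 1) φ).imp (Q n (k + 1) φ)) :=
      syll ih (.negIntro hlt trivial trivial (Set.subset_univ _))
    have h2 : Pr ((dia (n + 1) φ).imp (box (n + 1) (Q n (k + 1) φ))) :=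
      syll h1 (.mono hlt trivial trivial (Set.subset_univ _))
    exact t2 (by intro v h0 hn ha hi; simp only [hi]; grind) h2
      (box_dia (ξ := n + 1) (a := Q n (k + 1) φ) (b := φ))

theorem toJ (j n : Ordinal) (hjn : j ≤ n) (φ : GLPFormula) (k : ℕ) :
    Pr ((dia (n + 1) φ).imp (dia j (φ.and (Q n k φ)))) :=
  syll (toQ n φ k)
    (.negIntro (Order.lt_add_one_iff.2 hjn) trivial trivial (Set.subset_univ _))

end GLPAux

/-- `Π_j`-consequences, algebraic version: for `j ≤ n`, `⟨n+1⟩φ` is `j`-conservative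
over `{⟨j⟩(φ ∧ Q_n^k(φ)) : k < ω}`. -/
theorem pi_j_consequences_algebraic (j n : ℕ) (hjn : j ≤ n) (φ : GLPFormula)
    (hφ : IsOmegaFormula φ) (ψ : GLPFormula) (hψ : IsOmegaFormula ψ) :
    GLPProves ((GLPFormula.dia ((n : Ordinal) + 1) φ).imp (GLPFormula.dia (j : Ordinal) ψ)) ↔
      SetProves Set.univ
        {χ | ∃ k : ℕ, χ = GLPFormula.dia (j : Ordinal) (GLPFormula.and φ (Q (n : Ordinal) k φ))}
        (GLPFormula.dia (j : Ordinal) ψ) := by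
  have hjn' : (j : Ordinal.{0}) ≤ (n : Ordinal.{0}) := by exact_mod_cast hjn
  constructor
  · intro h
    obtain ⟨k, hk⟩ := GLPAux.forward _ _ hjn' φ ψ h
    refine ⟨[GLPFormula.dia (j : Ordinal) (GLPFormula.and φ (Q (n : Ordinal) k φ))], ?_, GLPAux.syll (GLPAux.tt ?_) hk⟩
    · intro χ hχ
      exact ⟨k, List.mem_singleton.1 hχ⟩
    · intro v h0 hn ha hi
      simp only [listConj, hi, ha]
      grind
  · rintro ⟨l, hl, h⟩
    refine GLPAux.syll ?_ h
    clear h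
    induction l with
    | nil => exact GLPAux.weaken (GLPAux.tt (fun v h0 _ _ _ => h0))
    | cons a l ih =>
      have h1 := ih (fun x hx => hl x (by simp [hx]))
      obtain ⟨k, rfl⟩ := hl a (by simp)
      have h2 := GLPAux.toJ _ _ hjn' φ k
      exact GLPAux.t2 (by intro v h0 hn ha hi; simp only [listConj, hi, ha]; grind) h1 h2
end

section
/- For all natural numbers j ≤ n, the set { ⟨j⟩⟨n⟩^k⊤ : k < ω } is j-conservative over the formula ⟨n+1⟩⊤; that is, for every GLP_ω formula ψ, ⟨n+1⟩⊤ ⊢_GLP ⟨j⟩ψ if and only if { ⟨j⟩⟨n⟩^k⊤ : k < ω } ⊢_GLP ⟨j⟩ψ. Here ⟨n⟩^k⊤ denotes k iterated applications of ⟨n⟩ to ⊤. -/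
namespace GLPAux

open GLPFormula

/-- The Boolean-respecting valuations. -/
structure BoolVal (v : GLPFormula → Prop) : Prop where
  top : v GLPFormula.top
  neg : ∀ a, v a.neg ↔ ¬ v a
  and : ∀ a b, v (a.and b) ↔ (v a ∧ v b)
  imp : ∀ a b, v (a.imp b) ↔ (v a → v b)

/-- Boolean valuations satisfying every theorem of GLP. -/
structure Good (v : GLPFormula → Prop) : Prop extends BoolVal v where
  thm : ∀ a, GLPProves a → v a

theorem taut_val {a : GLPFormula} (h : IsTautology a) {v : GLPFormula → Prop}
    (hv : BoolVal v) : v a := by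
  classical
  have := h (fun x => decide (v x)) (by simpa using hv.top)
    (by intro a; simp [hv.neg]) (by intro a b; simp [hv.and])
    (by intro a b; by_cases v a <;> by_cases v b <;> simp_all [hv.imp])
  simpa using this

theorem taut_of {a : GLPFormula} (h : ∀ v, BoolVal v → v a) : GLPProves a := by
  refine GLPProof.taut (Set.subset_univ _) ?_
  intro v h1 h2 h3 h4
  refine h (fun x => v x = true) ⟨h1, ?_, ?_, ?_⟩
  · intro a; simp [h2]
  · intro a b; simp [h3]
  · intro a b; rw [h4]; cases v a <;> cases v b <;> simp

/-- Theories closed under modus ponens and necessitation for indices in `I`. -/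
structure Th (I : Set Ordinal) (T : Set GLPFormula) : Prop where
  thm : ∀ a, GLPProves a → a ∈ T
  mp : ∀ a b, a.imp b ∈ T → a ∈ T → b ∈ T
  nec : ∀ i ∈ I, ∀ a ∈ T, box i a ∈ T

theorem exists_max {I : Set Ordinal} {T : Set GLPFormula} (O : Set GLPFormula)
    (hT : Th I T) (hO : ∀ a ∈ O, a ∉ T) :
    ∃ M, T ⊆ M ∧ Th I M ∧ (∀ a ∈ O, a ∉ M) ∧
      ∀ M', M ⊆ M' → Th I M' → (∀ a ∈ O, a ∉ M') → M' ⊆ M := by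
  obtain ⟨M, hTM, hM⟩ := zorn_subset_nonempty {M | Th I M ∧ ∀ a ∈ O, a ∉ M} (by
    intro c hc hchain hne
    refine ⟨⋃₀ c, ⟨⟨?_, ?_, ?_⟩, ?_⟩, fun s hs => Set.subset_sUnion_of_mem hs⟩
    · intro a ha
      obtain ⟨s, hs⟩ := hne
      exact ⟨s, hs, (hc hs).1.thm a ha⟩
    · rintro a b ⟨s, hs, has⟩ ⟨t, ht, hat⟩
      rcases hchain.total hs ht with h | h
      · exact ⟨t, ht, (hc ht).1.mp a b (h has) hat⟩
      · exact ⟨s, hs, (hc hs).1.mp a b has (h hat)⟩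
    · rintro i hi a ⟨s, hs, has⟩
      exact ⟨s, hs, (hc hs).1.nec i hi a has⟩
    · rintro a ha ⟨s, hs, has⟩
      exact (hc hs).2 a ha has) T ⟨hT, hO⟩
  exact ⟨M, hTM, hM.prop.1, hM.prop.2, fun M' h1 h2 h3 => hM.le_of_ge ⟨h2, h3⟩ h1⟩

theorem Th.weaken {I : Set Ordinal} {T : Set GLPFormula} (h : Th I T) : Th ∅ T :=
  ⟨h.thm, h.mp, fun _ hi => hi.elim⟩

theorem Th.taut1 {I : Set Ordinal} {T : Set GLPFormula} (h : Th I T) {a b : GLPFormula}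
    (ha : a ∈ T) (H : ∀ v, BoolVal v → v a → v b) : b ∈ T :=
  h.mp a b (h.thm _ (taut_of fun v hv => (hv.imp a b).2 (H v hv))) ha

theorem Th.taut2 {I : Set Ordinal} {T : Set GLPFormula} (h : Th I T) {a b c : GLPFormula}
    (ha : a ∈ T) (hb : b ∈ T) (H : ∀ v, BoolVal v → v a → v b → v c) : c ∈ T :=
  h.mp b c (h.mp a _ (h.thm _ (taut_of fun v hv => by
    rw [hv.imp, hv.imp]; exact H v hv)) ha) hb

/-- Relative Lindenbaum lemma. -/
theorem lindenbaum {T : Set GLPFormula} (hT : Th ∅ T) {x : GLPFormula} (hx : x ∉ T) :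
    ∃ v, Good v ∧ (∀ a ∈ T, v a) ∧ ¬ v x := by
  obtain ⟨M, hTM, hM, hO, hmax⟩ := exists_max {x} hT (by simpa using hx)
  have hxM : x ∉ M := hO x rfl
  have key : ∀ a, a ∉ M → a.imp x ∈ M := by
    intro a ha
    by_contra hcon
    refine ha (hmax {b | a.imp b ∈ M} ?_ ⟨?_, ?_, ?_⟩ ?_ ?_)
    · intro b hb
      exact hM.taut1 hb (by intro v hv h; simp [hv.imp]; tauto)
    · intro b hb
      exact hM.taut1 (hM.thm b hb) (by intro v hv h; simp [hv.imp]; tauto)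
    · intro b c hb hc
      exact hM.taut2 hb hc (by intro v hv; simp only [hv.imp]; tauto)
    · intro i hi; exact hi.elim
    · rintro _ rfl; exact hcon
    · exact hM.thm _ (taut_of fun v hv => by simp [hv.imp])
  have hneg : ∀ a, a.neg ∈ M ↔ ¬ a ∈ M := by
    intro a
    constructor
    · intro h1 h2
      exact hxM (hM.taut2 h1 h2 (by intro v hv; simp only [hv.neg]; tauto))
    · intro h1
      by_contra h2
      exact hxM (hM.taut2 (key _ h1) (key _ h2)
        (by intro v hv; simp only [hv.neg, hv.imp]; tauto))
  refine ⟨fun a => a ∈ M, ⟨⟨?_, hneg, ?_, ?_⟩, hM.thm⟩, fun a ha => hTM ha, hxM⟩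
  · exact hM.thm _ (taut_of fun v hv => hv.top)
  · intro a b
    constructor
    · intro h
      exact ⟨hM.taut1 h (by intro v hv; simp only [hv.and]; tauto),
        hM.taut1 h (by intro v hv; simp only [hv.and]; tauto)⟩
    · rintro ⟨h1, h2⟩
      exact hM.taut2 h1 h2 (by intro v hv; simp only [hv.and]; tauto)
  · intro a b
    constructor
    · intro h h2
      exact hM.mp _ _ h h2
    · intro h
      by_cases ha : a ∈ M
      · exact hM.taut1 (h ha) (by intro v hv; simp only [hv.imp]; tauto)
      · exact hM.taut1 ((hneg a).2 ha) (by intro v hv; simp only [hv.neg, hv.imp]; tauto)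

theorem complete {a : GLPFormula} (h : ∀ v, Good v → v a) : GLPProves a := by
  by_contra hcon
  obtain ⟨v, hv, _, hx⟩ := lindenbaum (T := {a | GLPProves a})
    ⟨fun _ h => h, fun _ _ h1 h2 => GLPProof.mp h1 h2, fun _ hi => hi.elim⟩ hcon
  exact hx (h v hv)

theorem Good.th {v : GLPFormula → Prop} (hv : Good v) (i : Ordinal) :
    Th {i} {a | v (box i a)} := by
  refine ⟨?_, ?_, ?_⟩
  · intro a ha
    exact hv.thm _ (GLPProof.nec (Set.mem_univ _) ha)
  · intro a b h1 h2
    have := hv.thm _ (GLPProof.distr (ξ := i) (φ := a) (ψ := b) (Set.mem_univ _)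
      (Set.subset_univ _) (Set.subset_univ _))
    rw [hv.imp, hv.imp] at this
    exact this h1 h2
  · intro i' hi a h1
    rw [Set.mem_singleton_iff.1 hi]
    have := hv.thm _ (GLPProof.trans (ξ := i) (φ := a) (Set.mem_univ _) (Set.subset_univ _))
    rw [hv.imp] at this
    exact this h1

theorem Good.up {v : GLPFormula → Prop} (hv : Good v) {i k : Ordinal} (hik : i ≤ k)
    {a : GLPFormula} (h : v (box i a)) : v (box k a) := by
  rcases hik.eq_or_lt with rfl | hlt
  · exact h
  have h2 := hv.thm _ (GLPProof.negIntro (φ := a.neg) hlt (Set.mem_univ _)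
    (Set.mem_univ _) (Set.subset_univ _))
  simp only [dia, hv.imp, hv.neg] at h2
  by_contra hcon
  refine h2 ?_ ((hv.th i).taut1 h (by intro v hv; simp only [hv.neg]; tauto))
  intro h3
  exact hcon ((hv.th k).taut1 h3 (by intro v hv; simp only [hv.neg]; tauto))

theorem Good.mono {v : GLPFormula → Prop} (hv : Good v) {i k : Ordinal} (hik : i < k)
    {a : GLPFormula} (h : ¬ v (box i a)) : v (box k (box i a).neg) := by
  have h2 := hv.thm _ (GLPProof.mono (φ := a.neg) hik (Set.mem_univ _)
    (Set.mem_univ _) (Set.subset_univ _))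
  rw [hv.imp] at h2
  have h3 : v (dia i a.neg) := by
    simp only [dia, hv.neg]
    intro h4
    exact h ((hv.th i).taut1 h4 (by intro v hv; simp only [hv.neg]; tauto))
  have h5 : GLPProves ((dia i a.neg).imp (box i a).neg) := complete (by
    intro w hw
    simp only [dia, hw.imp, hw.neg]
    intro h6 h7
    exact h6 ((hw.th i).taut1 h7 (by intro v hv; simp only [hv.neg]; tauto)))
  exact (hv.th k).mp _ _ ((hv.th k).thm _ h5) (h2 h3)

/-- Truth values determined by a prescription for the boxes. -/
def ev (B : Ordinal → Set GLPFormula) : GLPFormula → Prop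
  | .var _ => True
  | .top => True
  | .neg a => ¬ ev B a
  | .and a b => ev B a ∧ ev B b
  | .imp a b => ev B a → ev B b
  | .box i a => a ∈ B i

theorem ev_bool (B : Ordinal → Set GLPFormula) : BoolVal (ev B) :=
  ⟨trivial, fun _ => Iff.rfl, fun _ _ => Iff.rfl, fun _ _ => Iff.rfl⟩

theorem ev_good (B : Ordinal → Set GLPFormula) (h1 : ∀ i, Th {i} (B i))
    (h2 : ∀ i k, i < k → B i ⊆ B k)
    (h3 : ∀ i k, i < k → ∀ a, a ∉ B i → (box i a).neg ∈ B k) : Good (ev B) := by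
  refine ⟨ev_bool B, ?_⟩
  intro a ha
  induction ha with
  | taut _ h => exact taut_val h (ev_bool B)
  | distr _ _ _ => exact fun h h' => (h1 _).mp _ _ h h'
  | trans _ _ => exact fun h => (h1 _).nec _ rfl _ h
  | @lob i a _ _ =>
    intro h
    have h4 := (h1 i).nec i rfl _ h
    have h5 := (h1 i).mp _ _ ((h1 i).thm _ (GLPProof.lob (ξ := i) (φ := a) (Set.mem_univ _)
      (Set.subset_univ _))) h4
    exact (h1 i).mp _ _ h h5
  | negIntro hlt _ _ _ => exact fun h h' => h (h2 _ _ hlt h')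
  | mono hlt _ _ _ => exact fun h => h3 _ _ hlt _ h
  | mp _ _ ih1 ih2 => exact ih1 ih2
  | nec _ h _ => exact (h1 _).thm _ h

/-- The formulas `¬⟨n⟩^k⊤`. -/
def N (n : Ordinal) (k : ℕ) : GLPFormula := (diaPow n k GLPFormula.top).neg

theorem N_succ {v : GLPFormula → Prop} (hv : Good v) (n : Ordinal) (k : ℕ) :
    v (N n (k + 1)) ↔ v (box n (N n k)) := by
  simp only [N, diaPow, dia, hv.neg, not_not]

theorem N_mono1 (n : Ordinal) (k : ℕ) : GLPProves ((N n k).imp (N n (k + 1))) := by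
  induction k with
  | zero =>
    exact complete fun v hv => by
      simp only [hv.imp]
      intro h
      simp only [N, diaPow, hv.neg] at h
      exact absurd hv.top h
  | succ k ih =>
    exact complete fun v hv => by
      rw [hv.imp, N_succ hv, N_succ hv n (k+1)]
      intro h
      exact (hv.th n).mp _ _ ((hv.th n).thm _ ih) h

theorem N_mono (n : Ordinal) {k m : ℕ} (h : k ≤ m) : GLPProves ((N n k).imp (N n m)) := by
  induction m, h using Nat.le_induction with
  | base => exact taut_of fun v hv => by simp [hv.imp]
  | succ m _ ih =>
    exact complete fun v hv => by
      have h1 := hv.thm _ ih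
      have h2 := hv.thm _ (N_mono1 n m)
      simp only [hv.imp] at *
      tauto

theorem step {v : GLPFormula → Prop} (hv : Good v) {j n : Ordinal} (hjn : j ≤ n)
    (hN : ∀ k, ¬ v (box j (N n k))) :
    ∃ w, Good w ∧ (∀ i ≤ j, ∀ a, v (box i a) → w (box i a)) ∧
      ∀ k, ¬ w (box (j + 1) (N n k)) := by
  obtain ⟨G, hTG, hG, hO, hmax⟩ := exists_max (Set.range (N n)) (hv.th j)
    (by rintro _ ⟨k, rfl⟩; exact hN k)
  have hOk : ∀ k, N n k ∉ G := fun k => hO _ ⟨k, rfl⟩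
  -- consequences of maximality
  have key : ∀ x, x ∉ G → ∃ k, (box j x).imp (N n k) ∈ G := by
    intro x hx
    have hex : ∃ k, (x.and (box j x)).imp (N n k) ∈ G := by
      by_contra hcon
      push Not at hcon
      refine hx (hmax {b | (x.and (box j x)).imp b ∈ G} ?_ ⟨?_, ?_, ?_⟩ ?_ ?_)
      · intro b hb
        exact hG.taut1 hb (by intro v hv h; simp [hv.imp]; tauto)
      · intro b hb
        exact hG.taut1 (hG.thm b hb) (by intro v hv h; simp [hv.imp]; tauto)
      · intro b c hb hc
        exact hG.taut2 hb hc (by intro v hv; simp only [hv.imp]; tauto)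
      · intro i' hi b hb
        rw [Set.mem_singleton_iff.1 hi]
        have h1 := hG.nec j rfl _ hb
        refine hG.mp _ _ (hG.thm _ (complete ?_)) h1
        intro w hw
        simp only [hw.imp, hw.and]
        rintro h2 ⟨h3, h4⟩
        have h5 := (hw.th j).nec j rfl _ h4
        exact (hw.th j).mp _ _ h2 ((hw.th j).taut2 h4 h5
          (by intro v hv; simp only [hv.and]; tauto))
      · rintro _ ⟨k, rfl⟩; exact hcon k
      · exact hG.thm _ (taut_of fun v hv => by simp only [hv.imp, hv.and]; tauto)
    obtain ⟨k, hk⟩ := hex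
    refine ⟨k + 1, hG.mp _ _ (hG.thm _ (complete ?_)) (hG.nec j rfl _ hk)⟩
    intro w hw
    rw [hw.imp, hw.imp, N_succ hw]
    intro h2 h4
    have h5 := (hw.th j).nec j rfl _ h4
    exact hw.up hjn ((hw.th j).mp _ _ h2 ((hw.th j).taut2 h4 h5
          (by intro v hv; simp only [hv.and]; tauto)))
  -- the next theory
  let S : Set GLPFormula := {a | ∃ d k, d.imp (box (j + 1) d) ∈ G ∧ d.imp a ∈ G ∧
    (N n k).neg.imp d ∈ G}
  have hj1 : j < j + 1 := Order.lt_add_one_iff.2 le_rfl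
  have hGS : G ⊆ S := by
    intro a ha
    refine ⟨GLPFormula.top, 0, ?_, ?_, ?_⟩
    · refine hG.thm _ (complete fun w hw => ?_)
      rw [hw.imp]
      intro _
      exact (hw.th _).thm _ (taut_of fun v hv => hv.top)
    · exact hG.taut1 ha (by intro v hv; simp only [hv.imp]; tauto)
    · exact hG.thm _ (taut_of fun v hv => by rw [hv.imp]; intro _; exact hv.top)
  have hSth : Th {j + 1} S := by
    refine ⟨fun a ha => hGS (hG.thm a ha), ?_, ?_⟩
    · rintro a b ⟨d, k, h1, h2, h3⟩ ⟨d', k', h1', h2', h3'⟩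
      refine ⟨d.and d', max k k', ?_, ?_, ?_⟩
      · have h4 : GLPProves (((box (j+1) d).and (box (j+1) d')).imp (box (j+1) (d.and d'))) :=
          complete fun w hw => by
            rw [hw.imp, hw.and]
            rintro ⟨h5, h6⟩
            exact (hw.th (j+1)).taut2 h5 h6 (by intro v hv; simp only [hv.and]; tauto)
        have h5 : (d.and d').imp ((box (j+1) d).and (box (j+1) d')) ∈ G :=
          hG.taut2 h1 h1' (by intro v hv; simp only [hv.and, hv.imp]; tauto)
        exact hG.taut2 h5 (hG.thm _ h4) (by intro v hv; simp only [hv.and, hv.imp]; tauto)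
      · exact hG.taut2 h2 h2' (by intro v hv; simp only [hv.and, hv.imp]; tauto)
      · have h4 := hG.taut2 h3 (hG.thm _ (N_mono n (le_max_left k k')))
          (c := (N n (max k k')).neg.imp d)
          (by intro v hv; simp only [hv.neg, hv.imp]; tauto)
        have h5 := hG.taut2 h3' (hG.thm _ (N_mono n (le_max_right k k')))
          (c := (N n (max k k')).neg.imp d')
          (by intro v hv; simp only [hv.neg, hv.imp]; tauto)
        exact hG.taut2 h4 h5 (by intro v hv; simp only [hv.and, hv.imp]; tauto)
    · rintro i' hi a ⟨d, k, h1, h2, h3⟩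
      rw [Set.mem_singleton_iff.1 hi]
      refine ⟨d, k, h1, ?_, h3⟩
      have h4 := hG.nec j rfl _ h2
      have h5 : (box (j+1) d).imp (box (j+1) a) ∈ G := by
        refine hG.mp _ _ (hG.thm _ (complete fun w hw => ?_)) h4
        rw [hw.imp, hw.imp]
        intro h6 h7
        exact (hw.th (j+1)).mp _ _ (hw.up hj1.le h6) h7
      exact hG.taut2 h1 h5 (by intro v hv; simp only [hv.imp]; tauto)
  have hSN : ∀ k, N n k ∉ S := by
    rintro m ⟨d, k, h1, h2, h3⟩
    have h4 : (N n k).neg.imp (N n m) ∈ G :=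
      hG.taut2 h3 h2 (by intro v hv; simp only [hv.imp]; tauto)
    have h5 := hG.taut2 h4 (hG.thm _ (N_mono n (le_max_left k m)))
      (c := (N n m).neg.imp (N n (max k m)))
      (by intro v hv; simp only [hv.imp, hv.neg]; tauto)
    exact hOk _ (hG.taut2 h5 (hG.thm _ (N_mono n (le_max_right k m)))
      (by intro v hv; simp only [hv.imp, hv.neg]; tauto))
  have hSneg : ∀ x, x ∉ G → (box j x).neg ∈ S := by
    intro x hx
    obtain ⟨k, hk⟩ := key x hx
    refine ⟨(box j x).neg, k, ?_, ?_, ?_⟩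
    · refine hG.thm _ (complete fun w hw => ?_)
      rw [hw.imp, hw.neg]
      exact fun h => hw.mono hj1 h
    · exact hG.thm _ (taut_of fun v hv => by simp [hv.imp])
    · exact hG.taut1 hk (by intro v hv; simp only [hv.imp, hv.neg]; tauto)
  classical
  let B : Ordinal → Set GLPFormula := fun i =>
    if i < j then {a | v (box i a)} else if i = j then G else if i = j + 1 then S else Set.univ
  have Blt : ∀ i, i < j → B i = {a | v (box i a)} := fun i hi => if_pos hi
  have Bj : B j = G := by simp [B]
  have Bj1 : B (j + 1) = S := by
    simp only [B]
    rw [if_neg hj1.le.not_gt, if_neg hj1.ne']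
    exact if_pos trivial
  have Bgt : ∀ i, j + 1 < i → B i = Set.univ := by
    intro i hi
    simp only [B]
    rw [if_neg (hj1.trans hi).le.not_gt, if_neg (hj1.trans hi).ne', if_neg hi.ne']
  have cases4 : ∀ i, i < j ∨ i = j ∨ i = j + 1 ∨ j + 1 < i := by
    intro i
    rcases lt_trichotomy i j with h | h | h
    · exact .inl h
    · exact .inr (.inl h)
    · rcases (Order.add_one_le_of_lt h).eq_or_lt with h | h
      · exact .inr (.inr (.inl h.symm))
      · exact .inr (.inr (.inr h))
  refine ⟨ev B, ev_good B ?_ ?_ ?_, ?_, ?_⟩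
  · intro i
    rcases cases4 i with h | rfl | rfl | h
    · rw [Blt i h]; exact hv.th i
    · rw [Bj]; exact hG
    · rw [Bj1]; exact hSth
    · rw [Bgt i h]; exact ⟨fun _ _ => trivial, fun _ _ _ _ => trivial, fun _ _ _ _ => trivial⟩
  · intro i k hik
    rcases cases4 k with h | rfl | rfl | h
    · rw [Blt i (hik.trans h), Blt k h]; exact fun a ha => hv.up hik.le ha
    · rw [Bj, Blt i hik]; exact fun a ha => hTG (hv.up hik.le ha)
    · rw [Bj1]
      rcases (Order.lt_add_one_iff.1 hik).eq_or_lt with rfl | h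
      · rw [Bj]; exact hGS
      · rw [Blt i h]; exact fun a ha => hGS (hTG (hv.up h.le ha))
    · rw [Bgt k h]; exact Set.subset_univ _
  · intro i k hik a ha
    rcases cases4 k with h | rfl | rfl | h
    · rw [Blt i (hik.trans h)] at ha
      rw [Blt k h]; exact hv.mono hik ha
    · rw [Blt i hik] at ha
      rw [Bj]; exact hTG (hv.mono hik ha)
    · rw [Bj1]
      rcases (Order.lt_add_one_iff.1 hik).eq_or_lt with rfl | h
      · rw [Bj] at ha; exact hSneg a ha
      · rw [Blt i h] at ha; exact hGS (hTG (hv.mono h ha))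
    · rw [Bgt k h]; trivial
  · intro i hi a ha
    change a ∈ B i
    rcases hi.eq_or_lt with rfl | h
    · rw [Bj]; exact hTG ha
    · rw [Blt i h]; exact ha
  · intro k
    change ¬ (N n k ∈ B (j + 1))
    rw [Bj1]; exact hSN k

theorem iterate (n d : ℕ) : ∀ (j : ℕ), j + d = n + 1 → ∀ v, Good v →
    (∀ k, ¬ v (box (j : Ordinal) (N n k))) →
    ∃ w, Good w ∧ (∀ a, ∀ i ≤ (j : Ordinal), v (box i a) → w (box i a)) ∧
      ¬ w (box ((n : Ordinal) + 1) (N n 0)) := by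
  induction d with
  | zero =>
    intro j hj v hv hN
    refine ⟨v, hv, fun _ _ _ h => h, ?_⟩
    have : (j : Ordinal) = (n : Ordinal) + 1 := by
      have : j = n + 1 := by omega
      rw [this]; push_cast; rfl
    rw [← this]; exact hN 0
  | succ d ih =>
    intro j hj v hv hN
    obtain ⟨w, hw, h1, h2⟩ := step hv (j := j) (n := n) (by
      have : j ≤ n := by omega
      exact_mod_cast this) hN
    have hc : ((j + 1 : ℕ) : Ordinal) = (j : Ordinal) + 1 := by push_cast; rfl
    obtain ⟨u, hu, h3, h4⟩ := ih (j + 1) (by omega) w hw (by rw [hc]; exact h2)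
    refine ⟨u, hu, fun a i hi h => h3 a i ?_ (h1 i hi a h), h4⟩
    rw [hc]
    exact hi.trans (Order.lt_add_one_iff.2 le_rfl).le

theorem val_listConj {v : GLPFormula → Prop} (hv : BoolVal v) (l : List GLPFormula) :
    v (listConj l) ↔ ∀ a ∈ l, v a := by
  induction l with
  | nil => simp [listConj, hv.top]
  | cons a l ih => simp [listConj, hv.and, ih]

theorem setProves_th (τ : Set GLPFormula) : Th ∅ {a | SetProves Set.univ τ a} := by
  refine ⟨?_, ?_, fun _ hi => hi.elim⟩
  · intro a ha
    refine ⟨[], by simp, complete fun v hv => ?_⟩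
    rw [hv.imp]; exact fun _ => hv.thm a ha
  · rintro a b ⟨l, hl, h⟩ ⟨l', hl', h'⟩
    refine ⟨l ++ l', ?_, complete fun v hv => ?_⟩
    · intro x hx
      rcases List.mem_append.1 hx with hx | hx
      · exact hl x hx
      · exact hl' x hx
    · have h1 := hv.thm _ h
      have h2 := hv.thm _ h'
      simp only [hv.imp, val_listConj hv.toBoolVal] at *
      intro h3
      exact h1 (fun x hx => h3 x (List.mem_append_left _ hx))
        (h2 (fun x hx => h3 x (List.mem_append_right _ hx)))

/-- `⟨n+1⟩⊤` refutes every `[n+1]¬⟨n⟩^k⊤`. -/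
theorem dia_all {v : GLPFormula → Prop} (hv : Good v) {n m : Ordinal} (hnm : n < m)
    (h : ¬ v (box m (N n 0))) (k : ℕ) : ¬ v (box m (N n k)) := by
  induction k with
  | zero => exact h
  | succ k ih =>
    intro hk
    have h1 : ¬ v (box n (N n k)) := fun h1 => ih (hv.up hnm.le h1)
    have h2 := hv.mono hnm h1
    refine h ((hv.th m).mp _ _ ((hv.th m).mp _ _ ((hv.th m).thm _
      (complete fun w hw => ?_)) hk) h2)
    rw [hw.imp, N_succ hw, hw.imp, hw.neg]
    exact fun h3 h4 => absurd h3 h4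

end GLPAux

open GLPAux in
/-- For `j ≤ n`, `{⟨j⟩⟨n⟩^k⊤ : k < ω}` is `j`-conservative over `⟨n+1⟩⊤`. -/
theorem pi_j_consequences_worms (j n : ℕ) (hjn : j ≤ n)
    (ψ : GLPFormula) (hψ : IsOmegaFormula ψ) :
    GLPProves ((GLPFormula.dia ((n : Ordinal) + 1) GLPFormula.top).imp
        (GLPFormula.dia (j : Ordinal) ψ)) ↔
      SetProves Set.univ
        {χ | ∃ k : ℕ, χ = GLPFormula.dia (j : Ordinal) (diaPow (n : Ordinal) k GLPFormula.top)}
        (GLPFormula.dia (j : Ordinal) ψ) := by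
  constructor
  · intro h
    by_contra hcon
    obtain ⟨v, hv, h1, h2⟩ := lindenbaum (setProves_th _) hcon
    have hN : ∀ k, ¬ v (GLPFormula.box (j : Ordinal) (N n k)) := by
      intro k
      have h3 := h1 (GLPFormula.dia (j : Ordinal) (diaPow (n : Ordinal) k GLPFormula.top))
        ⟨[_], by simpa using ⟨k, rfl⟩, taut_of fun v hv => by
          rw [hv.imp, val_listConj hv]
          exact fun h => h _ (List.mem_singleton.2 rfl)⟩
      simpa only [N, GLPFormula.dia, hv.neg] using h3
    obtain ⟨w, hw, h3, h4⟩ := iterate n (n + 1 - j) j (by omega) v hv hN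
    have h5 := hw.thm _ h
    simp only [GLPFormula.dia, hw.imp, hw.neg] at h5
    refine h5 h4 (h3 _ _ le_rfl ?_)
    simpa only [GLPFormula.dia, hv.neg, not_not] using h2
  · rintro ⟨l, hl, h⟩
    refine complete fun v hv => ?_
    rw [hv.imp]
    intro h1
    have h2 := hv.thm _ h
    rw [hv.imp, val_listConj hv.toBoolVal] at h2
    refine h2 fun a ha => ?_
    obtain ⟨k, rfl⟩ := hl a ha
    have hlt : (n : Ordinal) < (n : Ordinal) + 1 := Order.lt_add_one_iff.2 le_rfl
    have hle : (j : Ordinal) ≤ (n : Ordinal) := by exact_mod_cast hjn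
    have h3 : ¬ v (GLPFormula.box ((n : Ordinal) + 1) (N n 0)) := by
      simpa only [N, diaPow, GLPFormula.dia, hv.neg] using h1
    have h4 := dia_all hv hlt h3 k
    simp only [GLPFormula.dia, hv.neg]
    exact fun h5 => h4 (hv.up (hle.trans hlt.le) h5)
end

section
/- (Demotion) Let φ and ψ be GLP formulas, let s : mod(φ∧ψ) → ω be the strictly increasing enumeration of the finite set of ordinals occurring as modality indices in φ∧ψ, and let φ̄ and ψ̄ be obtained from φ and ψ by replacing every modality index ξ by s(ξ). If ⊢_GLP φ → ψ, then ⊢_{GLP_ω} φ̄ → ψ̄. -/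
/-- Replace every modality index `ξ` of a formula by `s ξ`. -/
def relabel (s : Ordinal → Ordinal) : GLPFormula → GLPFormula
  | .var p => .var p
  | .top => .top
  | .neg φ => .neg (relabel s φ)
  | .and φ ψ => .and (relabel s φ) (relabel s ψ)
  | .imp φ ψ => .imp (relabel s φ) (relabel s ψ)
  | .box ξ φ => .box (s ξ) (relabel s φ)

universe u w

/-- Auxiliary formulas with arbitrary index type and arbitrary variable type. -/
inductive Fm (I : Type u) (V : Type w) : Type (max u w) where
  | var : V → Fm I V
  | top : Fm I V
  | neg : Fm I V → Fm I V
  | and : Fm I V → Fm I V → Fm I V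
  | imp : Fm I V → Fm I V → Fm I V
  | box : I → Fm I V → Fm I V

namespace Fm

variable {I : Type u} {V : Type w}

def iff (a b : Fm I V) : Fm I V := and (imp a b) (imp b a)

def mods : Fm I V → Set I
  | var _ => ∅
  | top => ∅
  | neg a => mods a
  | and a b => mods a ∪ mods b
  | imp a b => mods a ∪ mods b
  | box i a => insert i (mods a)

def subst {W : Type*} (f : V → Fm I W) : Fm I V → Fm I W
  | var v => f v
  | top => top
  | neg a => neg (subst f a)
  | and a b => and (subst f a) (subst f b)
  | imp a b => imp (subst f a) (subst f b)
  | box i a => box i (subst f a)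

def conj : List (Fm I V) → Fm I V
  | [] => top
  | a :: l => and a (conj l)

/-- valuations -/
structure IsVal (v : Fm I V → Prop) : Prop where
  top : v top
  neg : ∀ a, v (neg a) ↔ ¬ v a
  and : ∀ a b, v (and a b) ↔ (v a ∧ v b)
  imp : ∀ a b, v (imp a b) ↔ (v a → v b)

theorem IsVal.iff {v : Fm I V → Prop} (h : IsVal v) (a b : Fm I V) :
    v (iff a b) ↔ (v a ↔ v b) := by
  unfold Fm.iff
  rw [h.and, h.imp, h.imp]
  exact iff_iff_implies_and_implies.symm

theorem IsVal.conj {v : Fm I V → Prop} (h : IsVal v) (l : List (Fm I V)) :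
    v (conj l) ↔ ∀ a ∈ l, v a := by
  induction l with
  | nil => simp [Fm.conj, h.top]
  | cons a l ih => simp [Fm.conj, h.and, ih]

variable [LinearOrder I]

inductive Pf (S : Set I) (E : Set (Fm I V)) : Fm I V → Prop where
  | taut {a} : (∀ v, IsVal v → v a) → Pf S E a
  | ax {a} : a ∈ E → Pf S E a
  | distr {i a b} : i ∈ S → Pf S E (imp (box i (imp a b)) (imp (box i a) (box i b)))
  | four {i a} : i ∈ S → Pf S E (imp (box i a) (box i (box i a)))
  | lob {i a} : i ∈ S → Pf S E (imp (box i (imp (box i a) a)) (box i a))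
  | negIntro {i j a} : i < j → i ∈ S → j ∈ S →
      Pf S E (imp (neg (box j (neg a))) (neg (box i (neg a))))
  | mono {i j a} : i < j → i ∈ S → j ∈ S →
      Pf S E (imp (neg (box i (neg a))) (box j (neg (box i (neg a)))))
  | mp {a b} : Pf S E (imp a b) → Pf S E a → Pf S E b
  | nec {i a} : i ∈ S → Pf S E a → Pf S E (box i a)

variable {S : Set I} {E : Set (Fm I V)} {a b c d e : Fm I V}

theorem Pf.t1 (ha : Pf S E a) (h : ∀ v, IsVal v → v a → v b) : Pf S E b :=
  .mp (.taut fun v hv => (hv.imp _ _).2 (h v hv)) ha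

theorem Pf.t2 (ha : Pf S E a) (hb : Pf S E b) (h : ∀ v, IsVal v → v a → v b → v c) :
    Pf S E c :=
  .mp (ha.t1 (b := imp b c) fun v hv h1 => (hv.imp _ _).2 (h v hv h1)) hb

theorem Pf.t3 (ha : Pf S E a) (hb : Pf S E b) (hc : Pf S E c)
    (h : ∀ v, IsVal v → v a → v b → v c → v d) :
    Pf S E d :=
  .mp (ha.t2 (c := imp c d) hb fun v hv h1 h2 => (hv.imp _ _).2 (h v hv h1 h2)) hc

theorem Pf.t4 (ha : Pf S E a) (hb : Pf S E b) (hc : Pf S E c) (hd : Pf S E d)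
    (h : ∀ v, IsVal v → v a → v b → v c → v d → v e) :
    Pf S E e :=
  .mp (ha.t3 (d := imp d e) hb hc fun v hv h1 h2 h3 => (hv.imp _ _).2 (h v hv h1 h2 h3)) hd

theorem Pf.trans' (h1 : Pf S E (imp a b)) (h2 : Pf S E (imp b c)) : Pf S E (imp a c) :=
  h1.t2 h2 fun v hv => by simp only [hv.imp]; tauto

/-- A normal operator. -/
structure Normal (S : Set I) (E : Set (Fm I V)) (B : Fm I V → Fm I V) : Prop where
  nec : ∀ {a}, Pf S E a → Pf S E (B a)
  distr : ∀ a b, Pf S E (imp (B (imp a b)) (imp (B a) (B b)))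

theorem normal_box {i : I} (hi : i ∈ S) : Normal S E (box i) :=
  ⟨fun h => .nec hi h, fun _ _ => .distr hi⟩

variable {B : Fm I V → Fm I V}

theorem Normal.m1 (hB : Normal S E B) (h : Pf S E (imp a b)) : Pf S E (imp (B a) (B b)) :=
  .mp (hB.distr _ _) (hB.nec h)

theorem Normal.m2 (hB : Normal S E B) (h : Pf S E (imp a (imp b c))) :
    Pf S E (imp (B a) (imp (B b) (B c))) :=
  (hB.m1 h).t2 (hB.distr b c) fun v hv => by simp only [hv.imp]; tauto

theorem Normal.t1 (hB : Normal S E B) (h : ∀ v, IsVal v → v a → v b) :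
    Pf S E (imp (B a) (B b)) :=
  hB.m1 (.taut fun v hv => (hv.imp _ _).2 (h v hv))

theorem Normal.t2 (hB : Normal S E B) (h : ∀ v, IsVal v → v a → v b → v c) :
    Pf S E (imp (B a) (imp (B b) (B c))) :=
  hB.m2 (.taut fun v hv => by simp only [hv.imp]; exact h v hv)

theorem Normal.congr (hB : Normal S E B) (h : Pf S E (iff a b)) : Pf S E (iff (B a) (B b)) :=
  (hB.m1 (a := a) (b := b) (h.t1 fun v hv => by simp only [hv.imp, hv.iff]; tauto)).t2
    (hB.m1 (a := b) (b := a) (h.t1 fun v hv => by simp only [hv.imp, hv.iff]; tauto))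
    fun v hv => by simp only [hv.imp, hv.iff]; tauto

theorem box_le {i j : I} (hij : i ≤ j) (hi : i ∈ S) (hj : j ∈ S) (a : Fm I V) :
    Pf S E (imp (box i a) (box j a)) := by
  rcases hij.eq_or_lt with rfl | hlt
  · exact .taut fun v hv => by simp only [hv.imp]; tauto
  · refine Pf.t3 (Pf.negIntro (a := neg a) hlt hi hj)
      ((normal_box hi).t1 (a := a) (b := neg (neg a)) fun v hv => ?_)
      ((normal_box hj).t1 (a := neg (neg a)) (b := a) fun v hv => ?_) fun v hv => ?_
    all_goals simp only [hv.imp, hv.neg]; tauto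

theorem box_pos {i j : I} (hij : i ≤ j) (hi : i ∈ S) (hj : j ∈ S) (a : Fm I V) :
    Pf S E (imp (box i a) (box j (box i a))) :=
  (Pf.four hi).trans' (box_le hij hi hj _)

theorem box_neg {i j : I} (hij : i < j) (hi : i ∈ S) (hj : j ∈ S) (a : Fm I V) :
    Pf S E (imp (neg (box i a)) (box j (neg (box i a)))) := by
  have h1 : Pf S E (iff (box i a) (box i (neg (neg a)))) :=
    (normal_box hi).congr (.taut fun v hv => by simp only [hv.iff, hv.neg]; tauto)
  have h2 := (normal_box (E := E) hj).m1 (a := neg (box i (neg (neg a)))) (b := neg (box i a))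
    (h1.t1 fun v hv => by simp only [hv.iff, hv.neg, hv.imp]; tauto)
  exact Pf.t3 (Pf.mono (a := neg a) hij hi hj) h1 h2
    fun v hv => by simp only [hv.iff, hv.neg, hv.imp]; tauto

/-- Löb's rule. -/
theorem lob_rule {i : I} (hi : i ∈ S) (h : Pf S E (imp (box i a) a)) : Pf S E a :=
  .mp h (.mp (.lob hi) (.nec hi h))

theorem Pf.weaken {S' : Set I} {E' : Set (Fm I V)} (hS : S ⊆ S')
    (hE : ∀ a ∈ E, Pf S' E' a) (h : Pf S E a) : Pf S' E' a := by
  induction h with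
  | taut h => exact .taut h
  | ax h => exact hE _ h
  | distr h => exact .distr (hS h)
  | four h => exact .four (hS h)
  | lob h => exact .lob (hS h)
  | negIntro h h1 h2 => exact .negIntro h (hS h1) (hS h2)
  | mono h h1 h2 => exact .mono h (hS h1) (hS h2)
  | mp _ _ h1 h2 => exact .mp h1 h2
  | nec h _ h1 => exact .nec (hS h) h1

theorem Pf.subst {W : Type*} (f : V → Fm I W) (h : Pf S E a) :
    Pf S (Fm.subst f '' E) (Fm.subst f a) := by
  induction h with
  | taut h =>
    exact .taut fun v hv => h (fun a => v (Fm.subst f a))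
      ⟨hv.top, fun _ => hv.neg _, fun _ _ => hv.and _ _, fun _ _ => hv.imp _ _⟩
  | ax h => exact .ax ⟨_, h, rfl⟩
  | distr h => exact .distr h
  | four h => exact .four h
  | lob h => exact .lob h
  | negIntro h h1 h2 => exact .negIntro h h1 h2
  | mono h h1 h2 => exact .mono h h1 h2
  | mp _ _ h1 h2 => exact .mp h1 h2
  | nec h _ h1 => exact .nec h h1

theorem Pf.finite (h : Pf S E a) : ∃ T : Set I, T.Finite ∧ T ⊆ S ∧ Pf T E a := by
  induction h with
  | taut h => exact ⟨∅, Set.finite_empty, by simp, .taut h⟩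
  | ax h => exact ⟨∅, Set.finite_empty, by simp, .ax h⟩
  | @distr i a b h => exact ⟨{i}, by simp, by simpa using h, .distr (by simp)⟩
  | @four i a h => exact ⟨{i}, by simp, by simpa using h, .four (by simp)⟩
  | @lob i a h => exact ⟨{i}, by simp, by simpa using h, .lob (by simp)⟩
  | @negIntro i j a h h1 h2 =>
    exact ⟨{i, j}, by simp, by rintro x (rfl | rfl) <;> assumption,
      .negIntro h (by simp) (by simp)⟩
  | @mono i j a h h1 h2 =>
    exact ⟨{i, j}, by simp, by rintro x (rfl | rfl) <;> assumption,
      .mono h (by simp) (by simp)⟩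
  | mp _ _ h1 h2 =>
    obtain ⟨T1, f1, s1, p1⟩ := h1
    obtain ⟨T2, f2, s2, p2⟩ := h2
    exact ⟨T1 ∪ T2, f1.union f2, Set.union_subset s1 s2,
      .mp (p1.weaken (by simp) fun _ h => .ax h) (p2.weaken (by simp) fun _ h => .ax h)⟩
  | @nec i a h _ h1 =>
    obtain ⟨T1, f1, s1, p1⟩ := h1
    exact ⟨insert i T1, f1.insert i, Set.insert_subset h s1,
      .nec (by simp) (p1.weaken (by simp) fun _ h => .ax h)⟩

/-! ### Removing the largest modality -/

open Classical in
noncomputable def trTop (S : Set I) : Fm I V → Fm I V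
  | var v => var v
  | top => top
  | neg a => neg (trTop S a)
  | and a b => and (trTop S a) (trTop S b)
  | imp a b => imp (trTop S a) (trTop S b)
  | box i a => if i ∈ S then box i (trTop S a) else top

theorem trTop_eq (a : Fm I V) (h : a.mods ⊆ S) : trTop S a = a := by
  induction a with
  | var v => rfl
  | top => rfl
  | neg a ih => simp [trTop, ih h]
  | and a b iha ihb =>
    simp [trTop, iha (Set.subset_union_left.trans h), ihb (Set.subset_union_right.trans h)]
  | imp a b iha ihb =>
    simp [trTop, iha (Set.subset_union_left.trans h), ihb (Set.subset_union_right.trans h)]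
  | box i a ih =>
    simp [trTop, ih ((Set.subset_insert _ _).trans h), h (Set.mem_insert _ _)]

theorem remove_top {k : I} (hk : ∀ i ∈ S, i ≤ k) (h : Pf S ∅ a) :
    Pf (S \ {k}) ∅ (trTop (S \ {k}) a) := by
  have hS : ∀ i ∈ S, i ≠ k → i ∈ S \ {k} := fun i h h' => ⟨h, h'⟩
  have hk' : k ∉ S \ {k} := fun h => h.2 rfl
  induction h with
  | taut h =>
    exact .taut fun v hv => h (fun a => v (trTop _ a))
      ⟨hv.top, fun _ => hv.neg _, fun _ _ => hv.and _ _, fun _ _ => hv.imp _ _⟩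
  | ax h => exact h.elim
  | @distr i a b h =>
    by_cases hi : i ∈ S \ {k}
    · simp only [trTop, hi, if_true]; exact .distr hi
    · simp only [trTop, hi, if_false]; exact .taut fun v hv => by simp only [hv.imp]; tauto
  | @four i a h =>
    by_cases hi : i ∈ S \ {k}
    · simp only [trTop, hi, if_true]; exact .four hi
    · simp only [trTop, hi, if_false]; exact .taut fun v hv => by simp only [hv.imp]; tauto
  | @lob i a h =>
    by_cases hi : i ∈ S \ {k}
    · simp only [trTop, hi, if_true]; exact .lob hi
    · simp only [trTop, hi, if_false]
      exact .taut fun v hv => by simp only [hv.imp]; have := hv.top; tauto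
  | @negIntro i j a h h1 h2 =>
    have hi : i ∈ S \ {k} := hS i h1 (ne_of_lt (h.trans_le (hk _ h2)))
    by_cases hj : j ∈ S \ {k}
    · simp only [trTop, hi, hj, if_true]; exact .negIntro h hi hj
    · simp only [trTop, hi, hj, if_false]
      exact .taut fun v hv => by simp only [hv.imp, hv.neg]; have := hv.top; tauto
  | @mono i j a h h1 h2 =>
    have hi : i ∈ S \ {k} := hS i h1 (ne_of_lt (h.trans_le (hk _ h2)))
    by_cases hj : j ∈ S \ {k}
    · simp only [trTop, hi, hj, if_true]; exact .mono h hi hj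
    · simp only [trTop, hj, if_false]
      exact .taut fun v hv => by simp only [hv.imp]; have := hv.top; tauto
  | mp _ _ h1 h2 => exact .mp h1 h2
  | @nec i a h _ h1 =>
    by_cases hi : i ∈ S \ {k}
    · simp only [trTop, hi, if_true]; exact .nec hi h1
    · simp only [trTop, hi, if_false]; exact .taut fun v hv => hv.top

/-! ### Removing the smallest modality -/

open Classical in
noncomputable def trLow (S : Set I) (k : I) (c : Fm I V → Prop) : Fm I V → Fm I V
  | var v => var v
  | top => top
  | neg a => neg (trLow S k c a)
  | and a b => and (trLow S k c a) (trLow S k c b)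
  | imp a b => imp (trLow S k c a) (trLow S k c b)
  | box i a => if i ∈ S then box i (trLow S k c a) else
      if i = k then (if c a then top else neg top) else top

theorem trLow_eq {k : I} {c : Fm I V → Prop} (a : Fm I V) (h : a.mods ⊆ S) :
    trLow S k c a = a := by
  induction a with
  | var v => rfl
  | top => rfl
  | neg a ih => simp [trLow, ih h]
  | and a b iha ihb =>
    simp [trLow, iha (Set.subset_union_left.trans h), ihb (Set.subset_union_right.trans h)]
  | imp a b iha ihb =>
    simp [trLow, iha (Set.subset_union_left.trans h), ihb (Set.subset_union_right.trans h)]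
  | box i a ih =>
    simp [trLow, ih ((Set.subset_insert _ _).trans h), h (Set.mem_insert _ _)]

open Classical in
noncomputable def bigX (S : Set I) (k : I) (L : List (Fm I V)) (c : Fm I V → Prop) : Fm I V :=
  conj ((L.filter (fun a => c a)).map (trLow S k c))

noncomputable def lowC (S : Set I) (k h : I) (L : List (Fm I V)) : ℕ → Fm I V → Prop
  | 0, _ => True
  | n + 1, a => lowC S k h L n a ∧
      Pf S ∅ (imp (box h (bigX S k L (lowC S k h L n))) (trLow S k (lowC S k h L n) a))

theorem lowC_anti {k h : I} {L : List (Fm I V)} {m n : ℕ} (hmn : m ≤ n) {a : Fm I V}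
    (ha : lowC S k h L n a) : lowC S k h L m a := by
  induction hmn with
  | refl => exact ha
  | step _ ih => exact ih ha.1

theorem lowC_of {k h : I} {L : List (Fm I V)} {a : Fm I V} (n : ℕ)
    (ha : ∀ m < n, Pf S ∅ (imp (box h (bigX S k L (lowC S k h L m)))
      (trLow S k (lowC S k h L m) a)))
     : lowC S k h L n a := by
  induction n with
  | zero => trivial
  | succ n ih => exact ⟨ih fun m hm => ha m (by omega), ha n (by omega)⟩

theorem lowC_pf {k h : I} {L : List (Fm I V)} {a : Fm I V} {n m : ℕ}
    (ha : lowC S k h L n a) (hm : m < n) : Pf S ∅ (imp (box h (bigX S k L (lowC S k h L m)))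
      (trLow S k (lowC S k h L m) a)) :=
  (lowC_anti (show m + 1 ≤ n from hm) ha).2

theorem low_sound {k h : I} (hkS : ∀ i ∈ S, k ≤ i) (hh : h ∈ S \ {k})
    (hhS : ∀ i ∈ S \ {k}, h ≤ i) (ha : Pf S ∅ a) :
    ∃ L0 : List (Fm I V), ∀ L, L0 ⊆ L → ∀ n,
      Pf (S \ {k}) ∅ (imp (box h (bigX (S \ {k}) k L (lowC (S \ {k}) k h L n)))
        (trLow (S \ {k}) k (lowC (S \ {k}) k h L n) a)) := by
  have hk' : k ∉ S \ {k} := fun h => h.2 rfl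
  have hS : ∀ i ∈ S, i ∉ S \ {k} → i = k := fun i h h' => by
    by_contra h''; exact h' ⟨h, h''⟩
  have key : ∀ {a u : Fm I V}, Pf (S \ {k}) ∅ a → Pf (S \ {k}) ∅ (imp u a) := fun h =>
    h.t1 fun v hv => by simp only [hv.imp]; tauto
  have triv : ∀ {u : Fm I V}, Pf (S \ {k}) ∅ (imp u top) := fun {u} =>
    .taut fun v hv => by simp only [hv.imp]; have := hv.top; tauto
  induction ha with
  | @taut a h =>
    refine ⟨[], fun L _ n => key ?_⟩
    exact .taut fun v hv => h (fun a => v (trLow _ _ _ a))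
      ⟨hv.top, fun _ => hv.neg _, fun _ _ => hv.and _ _, fun _ _ => hv.imp _ _⟩
  | ax h => exact h.elim
  | @distr i a b hi =>
    refine ⟨[], fun L _ n => key ?_⟩
    by_cases hi' : i ∈ S \ {k}
    · simp only [trLow, hi', if_true]; exact .distr hi'
    · obtain rfl := hS i hi hi'
      simp only [trLow, hk', if_false, if_true]
      have : lowC (S \ {i}) i h L n (imp a b) → lowC (S \ {i}) i h L n a →
          lowC (S \ {i}) i h L n b := fun h1 h2 =>
        lowC_of n fun m hm => (lowC_pf h1 hm).t2 (lowC_pf h2 hm) fun v hv => by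
          simp only [trLow, hv.imp]; tauto
      refine .taut fun v hv => ?_
      have := hv.top
      split_ifs <;> simp only [hv.imp, hv.neg] <;> tauto
  | @four i a hi =>
    refine ⟨[], fun L _ n => key ?_⟩
    by_cases hi' : i ∈ S \ {k}
    · simp only [trLow, hi', if_true]; exact .four hi'
    · obtain rfl := hS i hi hi'
      simp only [trLow, hk', if_false, if_true]
      have : lowC (S \ {i}) i h L n a → lowC (S \ {i}) i h L n (box i a) := fun h1 =>
        lowC_of n fun m hm => by
          simp only [trLow, hk', if_false, if_true, lowC_anti hm.le h1]
          exact triv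
      refine .taut fun v hv => ?_
      have := hv.top
      split_ifs <;> simp only [hv.imp, hv.neg] <;> tauto
  | @lob i a hi =>
    refine ⟨[], fun L _ n => key ?_⟩
    by_cases hi' : i ∈ S \ {k}
    · simp only [trLow, hi', if_true]; exact .lob hi'
    · obtain rfl := hS i hi hi'
      simp only [trLow, hk', if_false, if_true]
      have : lowC (S \ {i}) i h L n (imp (box i a) a) → lowC (S \ {i}) i h L n a := fun h1 => by
        have : ∀ m ≤ n, lowC (S \ {i}) i h L m a := by
          intro m
          induction m with
          | zero => intro _; trivial
          | succ m ih =>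
            intro hm
            have h3 := ih (by omega)
            refine ⟨h3, ?_⟩
            have := lowC_pf h1 hm
            simp only [trLow, hk', if_false, if_true, h3] at this
            exact this.t1 fun v hv => by
              have := hv.top
              simp only [hv.imp]; tauto
        exact this n le_rfl
      refine .taut fun v hv => ?_
      have := hv.top
      split_ifs <;> simp only [hv.imp, hv.neg] <;> tauto
  | @negIntro i j a hij h1 h2 =>
    have hj : j ∈ S \ {k} := ⟨h2, ne_of_gt ((hkS _ h1).trans_lt hij)⟩
    by_cases hi' : i ∈ S \ {k}
    · refine ⟨[], fun L _ n => key ?_⟩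
      simp only [trLow, hi', hj, if_true]; exact .negIntro hij hi' hj
    · obtain rfl := hS i h1 hi'
      refine ⟨[neg a], fun L hL n => ?_⟩
      simp only [trLow, hk', hj, if_false, if_true]
      by_cases hc : lowC (S \ {i}) i h L n (neg a)
      · simp only [hc, if_true]
        have h3 : Pf (S \ {i}) ∅ (imp (bigX (S \ {i}) i L (lowC (S \ {i}) i h L n))
            (neg (trLow (S \ {i}) i (lowC (S \ {i}) i h L n) a))) :=
          .taut fun v hv => by
            rw [hv.imp, bigX, hv.conj]
            intro h4
            exact h4 _ (List.mem_map.2 ⟨neg a, by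
              simp only [List.mem_filter, decide_eq_true_eq]
              exact ⟨hL (by simp), hc⟩, rfl⟩)
        exact ((normal_box hj).m1 h3).t2 (box_le (hhS j hj) hh hj
          (bigX (S \ {i}) i L (lowC (S \ {i}) i h L n))) fun v hv => by
            simp only [hv.imp, hv.neg]; tauto
      · simp only [hc, if_false]
        exact .taut fun v hv => by have := hv.top; simp only [hv.imp, hv.neg]; tauto
  | @mono i j a hij h1 h2 =>
    have hj : j ∈ S \ {k} := ⟨h2, ne_of_gt ((hkS _ h1).trans_lt hij)⟩
    refine ⟨[], fun L _ n => key ?_⟩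
    by_cases hi' : i ∈ S \ {k}
    · simp only [trLow, hi', hj, if_true]; exact .mono hij hi' hj
    · obtain rfl := hS i h1 hi'
      simp only [trLow, hk', hj, if_false, if_true]
      split_ifs with hc
      · exact .taut fun v hv => by have := hv.top; simp only [hv.imp, hv.neg]; tauto
      · have : Pf (S \ {i}) ∅ (box j (neg (neg (top : Fm I V)))) :=
          .nec hj (.taut fun v hv => by have := hv.top; simp only [hv.neg]; tauto)
        exact this.t1 fun v hv => by simp only [hv.imp]; tauto
  | mp _ _ h1 h2 =>
    obtain ⟨L1, h1⟩ := h1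
    obtain ⟨L2, h2⟩ := h2
    refine ⟨L1 ++ L2, fun L hL n => ?_⟩
    exact (h1 L (fun x hx => hL (by simp [hx])) n).t2 (h2 L (fun x hx => hL (by simp [hx])) n)
      fun v hv => by simp only [trLow, hv.imp]; tauto
  | @nec i a hi _ h1 =>
    obtain ⟨L1, h1⟩ := h1
    refine ⟨L1, fun L hL n => ?_⟩
    by_cases hi' : i ∈ S \ {k}
    · simp only [trLow, hi', if_true]
      exact (box_pos (hhS i hi') hh hi' _).trans' ((normal_box hi').m1 (h1 L hL n))
    · obtain rfl := hS i hi hi'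
      have : lowC (S \ {i}) i h L n a := lowC_of n fun m _ => h1 L hL m
      simp only [trLow, hk', if_false, if_true, this]
      exact triv

theorem low_stable {k h : I} (L : List (Fm I V)) :
    ∃ n, ∀ a ∈ L, lowC S k h L n a → lowC S k h L (n + 1) a := by
  classical
  by_contra hcon
  push Not at hcon
  have : ∀ n, (L.filter (fun a => lowC S k h L n a)).length + n ≤ L.length := by
    intro n
    induction n with
    | zero => simpa using List.length_filter_le _ _
    | succ n ih =>
      obtain ⟨a, haL, h1, h2⟩ := hcon n
      have : (L.filter (fun a => lowC S k h L (n + 1) a)).length <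
          (L.filter (fun a => lowC S k h L n a)).length := by
        have h3 : L.filter (fun a => lowC S k h L (n + 1) a) =
            (L.filter (fun a => lowC S k h L n a)).filter (fun a => lowC S k h L (n + 1) a) := by
          rw [List.filter_filter]
          congr 1
          funext x
          by_cases hx : lowC S k h L (n + 1) x
          · simp [hx, hx.1]
          · simp [hx]
        rw [h3]
        refine List.length_filter_lt_length_iff_exists.2 ⟨a, ?_, ?_⟩
        · simp [haL, h1]
        · simpa using h2
      omega
  have := this (L.length + 1)
  omega

theorem remove_low {k h : I} (hkS : ∀ i ∈ S, k ≤ i) (hh : h ∈ S \ {k})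
    (hhS : ∀ i ∈ S \ {k}, h ≤ i) (ha : Pf S ∅ a) (hm : a.mods ⊆ S \ {k}) :
    Pf (S \ {k}) ∅ a := by
  obtain ⟨L, hL⟩ := low_sound hkS hh hhS ha
  obtain ⟨n, hn⟩ := low_stable (S := S \ {k}) (k := k) (h := h) L
  have h1 := hL L (fun _ h => h) n
  rw [trLow_eq a hm] at h1
  refine .mp h1 (.nec hh (lob_rule hh ?_))
  have : ∀ (u : Fm I V) (l : List (Fm I V)), (∀ x ∈ l, Pf (S \ {k}) ∅ (imp u x)) →
      Pf (S \ {k}) ∅ (imp u (conj l)) := by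
    intro u l hl
    induction l with
    | nil => exact .taut fun v hv => by have := hv.top; simp only [conj, hv.imp]; tauto
    | cons x l ih =>
      exact (hl x (by simp)).t2 (ih fun y hy => hl y (by simp [hy])) fun v hv => by
        simp only [conj, hv.imp, hv.and]; tauto
  refine this _ _ fun x hx => ?_
  obtain ⟨b, hb, rfl⟩ := List.mem_map.1 hx
  simp only [List.mem_filter, decide_eq_true_eq] at hb
  exact (hn b hb.1 hb.2).2

/-! ### Fixed points -/

theorem subst_subst {W X : Type*} (f : V → Fm I W) (g : W → Fm I X) (a : Fm I V) :
    subst g (subst f a) = subst (fun v => subst g (f v)) a := by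
  induction a <;> simp_all [subst]

theorem subst_var (a : Fm I V) : subst var a = a := by
  induction a <;> simp_all [subst]

theorem mods_subst_update [DecidableEq V] (q : V) (D a : Fm I V) :
    (subst (Function.update var q D) a).mods ⊆ a.mods ∪ D.mods := by
  induction a with
  | var v =>
    by_cases h : v = q
    · subst h; simp [subst]
    · simp [subst, h, mods]
  | top => simp [subst, mods]
  | neg a ih => simpa [subst, mods] using ih
  | and a b iha ihb =>
    intro x hx
    rcases hx with hx | hx
    · rcases iha hx with h | h <;> simp [mods, h]
    · rcases ihb hx with h | h <;> simp [mods, h]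
  | imp a b iha ihb =>
    intro x hx
    rcases hx with hx | hx
    · rcases iha hx with h | h <;> simp [mods, h]
    · rcases ihb hx with h | h <;> simp [mods, h]
  | box i a ih =>
    intro x hx
    rcases hx with rfl | hx
    · simp [mods]
    · rcases ih hx with h | h <;> simp [mods, h]

theorem fix_congr [DecidableEq V] (q : V) {j : I} (hj : j ∈ S) {D : Fm I V}
    (hD : Pf S E (imp D (box j D))) (C : Fm I V) (hC : ∀ m ∈ C.mods, m ∈ S ∧ j ≤ m) :
    Pf S E (imp D (iff (subst (Function.update var q top) C)
      (subst (Function.update var q D) C))) := by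
  induction C with
  | var v =>
    by_cases h : v = q
    · subst h
      simp only [subst, Function.update_self]
      exact .taut fun v hv => by have := hv.top; simp only [hv.imp, hv.iff]; tauto
    · simp only [subst, Function.update_of_ne h]
      exact .taut fun v hv => by simp only [hv.imp, hv.iff]; tauto
  | top => exact .taut fun v hv => by simp only [subst, hv.imp, hv.iff]; tauto
  | neg a ih => exact (ih hC).t1 fun v hv => by simp only [subst, hv.imp, hv.iff, hv.neg]; tauto
  | and a b iha ihb =>
    exact (iha fun m hm => hC m (Or.inl hm)).t2 (ihb fun m hm => hC m (Or.inr hm)) fun v hv => by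
      simp only [subst, hv.imp, hv.iff, hv.and]; tauto
  | imp a b iha ihb =>
    exact (iha fun m hm => hC m (Or.inl hm)).t2 (ihb fun m hm => hC m (Or.inr hm)) fun v hv => by
      simp only [subst, hv.imp, hv.iff]; tauto
  | box i a ih =>
    have ih := ih fun m hm => hC m (Or.inr hm)
    obtain ⟨hi, hji⟩ := hC i (Or.inl rfl)
    have h1 := (hD.trans' (box_le hji hj hi D)).trans' ((normal_box hi).m1 ih)
    simp only [subst]
    generalize subst (Function.update var q top) a = x at *
    generalize subst (Function.update var q D) a = y at *
    exact h1.t3 ((normal_box hi).t2 (a := iff x y) (b := x) (c := y)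
        fun v hv => by simp only [hv.iff]; tauto)
      ((normal_box hi).t2 (a := iff x y) (b := y) (c := x)
        fun v hv => by simp only [hv.iff]; tauto)
      fun v hv => by simp only [hv.imp, hv.iff]; tauto

theorem fix_one [DecidableEq V] (q : V) {j : I} (hj : j ∈ S)
    (C : Fm I V) (hC : ∀ m ∈ C.mods, m ∈ S ∧ j ≤ m) :
    Pf S E (iff (box j (subst (Function.update var q top) C))
      (box j (subst (Function.update var q (box j (subst (Function.update var q top) C))) C))) := by
  have h := fix_congr (E := E) q hj (D := box j (subst (Function.update var q top) C))
    (.four hj) C hC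
  generalize hx : subst (Function.update var q top) C = x at *
  generalize subst (Function.update var q (box j x)) C = y at *
  have h4 : Pf S E (imp (box j x) (box j (box j x))) := .four hj
  have h5 : Pf S E (imp (box j y) (box j (box j y))) := .four hj
  have h1 : Pf S E (imp (box j (box j x)) (imp (box j x) (box j y))) :=
    (normal_box hj).m2 (h.t1 fun v hv => by simp only [hv.imp, hv.iff]; tauto)
  have h2 : Pf S E (imp (box j (box j x)) (imp (box j y) (box j x))) :=
    (normal_box hj).m2 (h.t1 fun v hv => by simp only [hv.imp, hv.iff]; tauto)
  have h3 : Pf S E (imp (box j y) (box j x)) := by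
    refine lob_rule hj ?_
    have h6 : Pf S E (imp (box j (imp (box j y) (box j x)))
      (imp (box j (box j y)) (box j (box j x)))) := .distr hj
    exact h6.t3 h5 h2 fun v hv => by simp only [hv.imp]; tauto
  exact h1.t3 h4 h3 fun v hv => by simp only [hv.imp, hv.iff]; tauto

def eqs (L : List (V × I × Fm I V)) : Set (Fm I V) :=
  {a | ∃ e ∈ L, a = iff (var e.1) (box e.2.1 e.2.2)}

theorem fix_sorted (n : ℕ) : ∀ (L : List (V × I × Fm I V)), L.length = n →
    L.Pairwise (fun e e' => e'.2.1 ≤ e.2.1) → (L.map Prod.fst).Nodup →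
    (∀ e ∈ L, e.2.1 ∈ S) →
    (∀ e ∈ L, ∀ m ∈ e.2.2.mods, m ∈ S ∧ ∀ e' ∈ L, e'.2.1 ≤ m) →
    ∃ σ : V → Fm I V, (∀ v, v ∉ L.map Prod.fst → σ v = var v) ∧
      ∀ a, Pf S (eqs L) a → Pf S ∅ (subst σ a) := by
  classical
  induction n with
  | zero =>
    intro L hL _ _ _ _
    obtain rfl := List.length_eq_zero_iff.1 hL
    refine ⟨var, fun _ _ => rfl, fun a ha => ?_⟩
    rw [subst_var]
    exact ha.weaken subset_rfl fun b hb => by obtain ⟨e, he, _⟩ := hb; simp at he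
  | succ n ih =>
    intro L hL hsort hnd hS hm
    match L, hL with
    | (q, j, C) :: L', hL =>
    have hj : j ∈ S := hS (q, j, C) (by simp)
    have hC : ∀ m ∈ C.mods, m ∈ S ∧ j ≤ m := fun m hmC =>
      ⟨(hm (q, j, C) (by simp) m hmC).1, (hm (q, j, C) (by simp) m hmC).2 (q, j, C) (by simp)⟩
    set D : Fm I V := box j (subst (Function.update var q top) C) with hD
    have hDm : ∀ m ∈ D.mods, m = j ∨ m ∈ C.mods := by
      intro m h
      rcases h with h | h
      · exact Or.inl h
      · rcases mods_subst_update q top C h with h | h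
        · exact Or.inr h
        · exact h.elim
    set f : V → Fm I V := Function.update var q D with hf
    rw [List.pairwise_cons] at hsort
    simp only [List.map_cons, List.nodup_cons] at hnd
    have hfst : (L'.map (fun e => (e.1, e.2.1, subst f e.2.2))).map Prod.fst
        = L'.map Prod.fst := by
      rw [List.map_map]; rfl
    obtain ⟨σ, h1, h2⟩ := ih (L'.map (fun e => (e.1, e.2.1, subst f e.2.2)))
      (by simpa using hL)
      (by rw [List.pairwise_map]; exact hsort.2)
      (by rw [hfst]; exact hnd.2)
      (by
        intro e he
        obtain ⟨e, he0, rfl⟩ := List.mem_map.1 he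
        exact hS e (by simp [he0]))
      (by
        intro e he m hme
        obtain ⟨e, he0, rfl⟩ := List.mem_map.1 he
        have : m = j ∨ m ∈ C.mods ∨ m ∈ e.2.2.mods := by
          rcases mods_subst_update q D e.2.2 hme with h | h
          · tauto
          · have := hDm m h; tauto
        rcases this with rfl | h | h
        · refine ⟨hj, fun e' he' => ?_⟩
          obtain ⟨e', he1, rfl⟩ := List.mem_map.1 he'
          exact hsort.1 e' he1
        · have := hm (q, j, C) (by simp) m h
          refine ⟨this.1, fun e' he' => ?_⟩
          obtain ⟨e', he1, rfl⟩ := List.mem_map.1 he'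
          exact this.2 e' (by simp [he1])
        · have := hm e (by simp [he0]) m h
          refine ⟨this.1, fun e' he' => ?_⟩
          obtain ⟨e', he1, rfl⟩ := List.mem_map.1 he'
          exact this.2 e' (by simp [he1]))
    rw [hfst] at h1
    refine ⟨fun v => subst σ (f v), fun v hv => ?_, fun a ha => ?_⟩
    · simp only [List.map_cons, List.mem_cons, not_or] at hv
      show subst σ (f v) = var v
      rw [hf, Function.update_of_ne hv.1]
      exact h1 v hv.2
    · rw [← subst_subst]
      refine h2 _ ((ha.subst f).weaken subset_rfl ?_)
      rintro _ ⟨b, ⟨e, he, rfl⟩, rfl⟩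
      rcases List.mem_cons.1 he with rfl | he
      · have : subst f (iff (var q) (box j C)) = iff D (box j (subst f C)) := by
          simp [subst, iff, hf]
        change Pf S _ (subst f (iff (var q) (box j C)))
        rw [this]
        exact fix_one q hj C hC
      · have hne : e.1 ≠ q := fun h => hnd.1 (List.mem_map.2 ⟨e, he, h⟩)
        refine .ax ⟨_, List.mem_map.2 ⟨e, he, rfl⟩, ?_⟩
        simp [subst, iff, hf, Function.update_of_ne hne]

def flat : Fm I V → Fm I (V ⊕ (I × Fm I V))
  | var v => var (.inl v)
  | top => top
  | neg a => neg (flat a)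
  | and a b => and (flat a) (flat b)
  | imp a b => imp (flat a) (flat b)
  | box i a => var (.inr (i, a))

theorem flat_mods (a : Fm I V) : (flat a).mods = ∅ := by
  induction a <;> simp_all [flat, mods]

def boxSubs : Fm I V → List (I × Fm I V)
  | var _ => []
  | top => []
  | neg a => boxSubs a
  | and a b => boxSubs a ++ boxSubs b
  | imp a b => boxSubs a ++ boxSubs b
  | box i a => (i, a) :: boxSubs a

theorem boxSubs_mods (a : Fm I V) : ∀ p ∈ boxSubs a, p.1 ∈ a.mods := by
  induction a with
  | var v => simp [boxSubs]
  | top => simp [boxSubs]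
  | neg a ih => exact ih
  | and a b iha ihb =>
    intro p hp
    rcases List.mem_append.1 hp with h | h
    · exact Or.inl (iha p h)
    · exact Or.inr (ihb p h)
  | imp a b iha ihb =>
    intro p hp
    rcases List.mem_append.1 hp with h | h
    · exact Or.inl (iha p h)
    · exact Or.inr (ihb p h)
  | box i a ih =>
    intro p hp
    rcases List.mem_cons.1 hp with rfl | h
    · exact Or.inl rfl
    · exact Or.inr (ih p h)

theorem flat_eq {E : Set (Fm I (V ⊕ (I × Fm I V)))} (a : Fm I V)
    (hS : a.mods ⊆ S)
    (hE : ∀ p ∈ boxSubs a, iff (var (.inr p)) (box p.1 (flat p.2)) ∈ E) :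
    Pf S E (iff (subst (fun v => var (.inl v)) a) (flat a)) := by
  induction a with
  | var v => exact .taut fun v hv => by simp only [subst, flat, hv.iff]
  | top => exact .taut fun v hv => by simp only [subst, flat, hv.iff]
  | neg a ih =>
    exact (ih hS hE).t1 fun v hv => by simp only [subst, flat, hv.iff, hv.neg]; tauto
  | and a b iha ihb =>
    exact (iha (Set.subset_union_left.trans hS) fun p hp => hE p (by simp [boxSubs, hp])).t2
      (ihb (Set.subset_union_right.trans hS) fun p hp => hE p (by simp [boxSubs, hp]))
      fun v hv => by simp only [subst, flat, hv.iff, hv.and]; tauto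
  | imp a b iha ihb =>
    exact (iha (Set.subset_union_left.trans hS) fun p hp => hE p (by simp [boxSubs, hp])).t2
      (ihb (Set.subset_union_right.trans hS) fun p hp => hE p (by simp [boxSubs, hp]))
      fun v hv => by simp only [subst, flat, hv.iff, hv.imp]; tauto
  | box i a ih =>
    have h1 := ih ((Set.subset_insert _ _).trans hS) fun p hp => hE p (by simp [boxSubs, hp])
    have h2 := (normal_box (hS (Set.mem_insert _ _))).congr h1
    exact h2.t2 (.ax (hE (i, a) (by simp [boxSubs])))
      fun v hv => by simp only [subst, flat, hv.iff]; tauto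

theorem fix_general (Q : List (V × I × Fm I V)) (hnd : (Q.map Prod.fst).Nodup)
    (hS : ∀ e ∈ Q, e.2.1 ∈ S ∧ e.2.2.mods ⊆ S) :
    ∃ σ : V → Fm I V, (∀ v, v ∉ Q.map Prod.fst → σ v = var v) ∧
      ∀ a, Pf S (eqs Q) a → Pf S ∅ (subst σ a) := by
  classical
  let P : List (I × Fm I V) := (Q.flatMap (fun e => boxSubs e.2.2)).dedup
  let L0 : List ((V ⊕ (I × Fm I V)) × I × Fm I (V ⊕ (I × Fm I V))) :=
    Q.map (fun e => (.inl e.1, e.2.1, flat e.2.2)) ++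
      P.map (fun p => (.inr p, p.1, flat p.2))
  let r : ((V ⊕ (I × Fm I V)) × I × Fm I (V ⊕ (I × Fm I V))) →
    ((V ⊕ (I × Fm I V)) × I × Fm I (V ⊕ (I × Fm I V))) → Prop := fun e e' => e'.2.1 ≤ e.2.1
  haveI : Std.Total r := ⟨fun a b => le_total _ _⟩
  haveI : IsTrans _ r := ⟨fun a b c h1 h2 => le_trans h2 h1⟩
  have hperm := List.perm_insertionSort r L0
  have hP : ∀ p ∈ P, ∃ e ∈ Q, p ∈ boxSubs e.2.2 := by
    intro p hp
    simpa [P] using hp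
  have hL0 : ∀ e ∈ L0, e.2.1 ∈ S ∧ e.2.2.mods = ∅ := by
    intro e he
    rcases List.mem_append.1 he with he | he
    · obtain ⟨e, he0, rfl⟩ := List.mem_map.1 he
      exact ⟨(hS e he0).1, flat_mods _⟩
    · obtain ⟨p, hp, rfl⟩ := List.mem_map.1 he
      obtain ⟨e, he0, hpe⟩ := hP p hp
      exact ⟨(hS e he0).2 (boxSubs_mods _ _ hpe), flat_mods _⟩
  obtain ⟨σ, h1, h2⟩ := fix_sorted (S := S) _ (L0.insertionSort r) rfl
    (List.pairwise_insertionSort r L0)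
    (by
      rw [(hperm.map Prod.fst).nodup_iff]
      simp only [L0, List.map_append, List.map_map]
      rw [List.nodup_append]
      refine ⟨?_, ?_, ?_⟩
      · have : (Q.map (Prod.fst ∘ fun e : V × I × Fm I V =>
          ((.inl e.1 : V ⊕ (I × Fm I V)), e.2.1, flat e.2.2)))
            = (Q.map Prod.fst).map Sum.inl := by rw [List.map_map]; rfl
        rw [this]
        exact hnd.map Sum.inl_injective
      · exact (List.nodup_dedup _).map Sum.inr_injective
      · intro x hx y hy
        obtain ⟨e, _, rfl⟩ := List.mem_map.1 hx
        obtain ⟨p, _, rfl⟩ := List.mem_map.1 hy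
        simp)
    (fun e he => (hL0 e (hperm.mem_iff.1 he)).1)
    (fun e he m hm => by
      rw [(hL0 e (hperm.mem_iff.1 he)).2] at hm
      exact hm.elim)
  let g : V ⊕ (I × Fm I V) → Fm I V := Sum.elim var (fun _ => top)
  refine ⟨fun v => subst g (σ (.inl v)), fun v hv => ?_, fun a ha => ?_⟩
  · have : σ (.inl v) = var (.inl v) := by
      refine h1 _ fun hmem => hv ?_
      rw [(hperm.map Prod.fst).mem_iff] at hmem
      simp only [L0, List.map_append, List.map_map, List.mem_append, List.mem_map] at hmem
      rcases hmem with ⟨e, he, h⟩ | ⟨p, _, h⟩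
      · exact List.mem_map.2 ⟨e, he, Sum.inl_injective h⟩
      · simp at h
    show subst g (σ (.inl v)) = var v
    rw [this]
    rfl
  · have h3 := h2 (subst (fun v => var (.inl v)) a)
      ((ha.subst (fun v => (var (Sum.inl v) : Fm I (V ⊕ (I × Fm I V))))).weaken subset_rfl ?_)
    · have h4 := h3.subst g
      rw [Set.image_empty, subst_subst, subst_subst] at h4
      exact h4
    · rintro _ ⟨b, ⟨e, he, rfl⟩, rfl⟩
      have h4 := flat_eq (S := S) (E := eqs (L0.insertionSort r)) e.2.2 (hS e he).2 (by
        intro p hp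
        refine ⟨(.inr p, p.1, flat p.2), hperm.mem_iff.2 ?_, rfl⟩
        refine List.mem_append.2 (Or.inr (List.mem_map.2 ⟨p, ?_, rfl⟩))
        simp only [P, List.mem_dedup, List.mem_flatMap]
        exact ⟨e, he, hp⟩)
      have h5 := (normal_box (hS e he).1).congr h4
      have h6 : Pf S (eqs (L0.insertionSort r))
          (iff (var (.inl e.1)) (box e.2.1 (flat e.2.2))) :=
        .ax ⟨(.inl e.1, e.2.1, flat e.2.2), hperm.mem_iff.2
          (List.mem_append.2 (Or.inl (List.mem_map.2 ⟨e, he, rfl⟩))), rfl⟩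
      change Pf S _ (iff (var (Sum.inl e.1)) (box e.2.1
        (subst (fun v => (var (Sum.inl v) : Fm I (V ⊕ (I × Fm I V)))) e.2.2)))
      exact h5.t2 h6 fun v hv => by simp only [hv.iff]; tauto

/-! ### Removing an intermediate modality -/

structure Good (S : Set I) (E : Set (Fm I V)) (k : I) (B : Fm I V → Fm I V) : Prop
    extends Normal S E B where
  four : ∀ a, Pf S E (imp (B a) (B (B a)))
  lob : ∀ a, Pf S E (imp (B (imp (B a) a)) (B a))
  low : ∀ a, Pf S E (imp (box k a) (B a))
  up : ∀ z ∈ S, k < z → ∀ a, Pf S E (imp (B a) (box z a))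
  upn : ∀ z ∈ S, k < z → ∀ a, Pf S E (imp (neg (B a)) (box z (neg (B a))))

def jump (δ : Fm I V) (B : Fm I V → Fm I V) (a : Fm I V) : Fm I V :=
  imp (neg (B a)) (and δ (B (imp δ a)))

theorem good_box {k : I} (hk : k ∈ S) : Good S E k (box k) where
  toNormal := normal_box hk
  four _ := .four hk
  lob _ := .lob hk
  low _ := .taut fun v hv => by simp only [hv.imp]; tauto
  up _ hz hkz a := box_le hkz.le hk hz a
  upn _ hz hkz a := box_neg hkz hk hz a

theorem jump_le (δ : Fm I V) (B : Fm I V → Fm I V) (a : Fm I V) :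
    Pf S E (imp (B a) (jump δ B a)) :=
  .taut fun v hv => by simp only [jump, hv.imp, hv.neg]; tauto

theorem jump_self (δ : Fm I V) (hB : Normal S E B) : Pf S E (imp δ (jump δ B δ)) :=
  (hB.nec (.taut (a := imp δ δ) fun v hv => by simp only [hv.imp]; tauto)).t1
    fun v hv => by simp only [jump, hv.imp, hv.neg, hv.and]; tauto

theorem jump_good {k : I} {δ : Fm I V} (hB : Good S E k B)
    (hδ : ∀ z ∈ S, k < z → Pf S E (imp δ (box z δ)))
    (hδn : ∀ z ∈ S, k < z → Pf S E (imp (neg δ) (box z (neg δ)))) :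
    Good S E k (jump δ B) where
  nec h := .mp (jump_le _ _ _) (hB.nec h)
  distr a b := by
    have h1 := hB.distr a b
    have h2 := hB.toNormal.t2 (a := imp δ (imp a b)) (b := imp δ a) (c := imp δ b)
      fun v hv => by simp only [hv.imp]; tauto
    have h3 := hB.toNormal.t1 (a := imp a b) (b := imp δ (imp a b))
      fun v hv => by simp only [hv.imp]; tauto
    have h4 := hB.toNormal.t1 (a := a) (b := imp δ a)
      fun v hv => by simp only [hv.imp]; tauto
    exact h1.t4 h2 h3 h4 fun v hv => by
      simp only [jump, hv.imp, hv.neg, hv.and]; tauto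
  four a := by
    have h1 := (hB.four a).trans' (hB.toNormal.m1 (jump_le δ B a))
    have h2 := (hB.four (imp δ a)).trans' (hB.toNormal.t1 (b := imp δ (jump δ B a))
      fun v hv => by simp only [jump, hv.imp, hv.neg, hv.and]; tauto)
    generalize hx : jump δ B a = x at *
    exact h1.t2 h2 fun v hv => by
      rw [← hx] at *
      simp only [jump, hv.imp, hv.neg, hv.and] at *; tauto
  lob a := by
    have h1 : Pf S E (imp (B (imp (jump δ B a) a)) (B a)) :=
      (hB.toNormal.t1 (b := imp (B a) a)
        fun v hv => by simp only [jump, hv.imp, hv.neg, hv.and]; tauto).trans' (hB.lob a)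
    have h2 : Pf S E (imp (B (imp δ (imp (jump δ B a) a))) (B (imp δ a))) :=
      (hB.toNormal.t1 (b := imp (B (imp δ a)) (imp δ a))
        fun v hv => by simp only [jump, hv.imp, hv.neg, hv.and]; tauto).trans' (hB.lob _)
    exact h1.t2 h2 fun v hv => by
      simp only [jump, hv.imp, hv.neg, hv.and]; tauto
  low a := (hB.low a).trans' (jump_le _ _ _)
  up z hz hkz a := by
    have h1 := hB.up z hz hkz a
    have h2 := hB.up z hz hkz (imp δ a)
    have h3 := hδ z hz hkz
    have h4 : Pf S E (imp (box z (imp δ a)) (imp (box z δ) (box z a))) := .distr hz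
    exact h1.t4 h2 h3 h4 fun v hv => by
      simp only [jump, hv.imp, hv.neg, hv.and]; tauto
  upn z hz hkz a := by
    have h1 := hB.upn z hz hkz a
    have h2 := hB.upn z hz hkz (imp δ a)
    have h3 := hδn z hz hkz
    have h4 := (normal_box (E := E) hz).t2 (a := neg (B a)) (b := neg δ) (c := neg (jump δ B a))
      fun v hv => by simp only [jump, hv.imp, hv.neg, hv.and]; tauto
    have h5 := (normal_box (E := E) hz).t2 (a := neg (B a)) (b := neg (B (imp δ a)))
      (c := neg (jump δ B a))
      fun v hv => by simp only [jump, hv.imp, hv.neg, hv.and]; tauto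
    have h6 : Pf S E (imp (neg (jump δ B a))
        (and (neg (B a)) (imp δ (neg (B (imp δ a)))))) :=
      .taut fun v hv => by simp only [jump, hv.imp, hv.neg, hv.and]; tauto
    generalize jump δ B a = x at *
    have h7 := h1.t4 h2 h3 h6 (e := imp (neg x) (and (box z (neg (B a)))
      (imp (neg (box z (neg δ))) (box z (neg (B (imp δ a))))))) fun v hv => by
        simp only [hv.imp, hv.neg, hv.and]; tauto
    exact h7.t3 h4 h5 fun v hv => by
      simp only [hv.imp, hv.neg, hv.and]; tauto

def bigJ (k : I) : List (Fm I V) → Fm I V → Fm I V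
  | [] => box k
  | δ :: l => jump δ (bigJ k l)

theorem bigJ_good {k : I} (hk : k ∈ S) (l : List (Fm I V))
    (hδ : ∀ δ ∈ l, ∀ z ∈ S, k < z → Pf S E (imp δ (box z δ)))
    (hδn : ∀ δ ∈ l, ∀ z ∈ S, k < z → Pf S E (imp (neg δ) (box z (neg δ)))) :
    Good S E k (bigJ k l) ∧ ∀ δ ∈ l, Pf S E (imp δ (bigJ k l δ)) := by
  induction l with
  | nil => exact ⟨good_box hk, by simp⟩
  | cons x l ih =>
    obtain ⟨h1, h2⟩ := ih (fun δ h => hδ δ (by simp [h])) (fun δ h => hδn δ (by simp [h]))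
    refine ⟨jump_good h1 (hδ x (by simp)) (hδn x (by simp)), fun δ h => ?_⟩
    rcases List.mem_cons.1 h with rfl | h
    · exact jump_self _ h1.toNormal
    · exact (h2 δ h).trans' (jump_le _ _ _)

def deltas (L : List (Fm I V)) : List (Fm I (V ⊕ Fm I V)) :=
  L.map (fun x => neg (var (.inr x)))

open Classical in
noncomputable def trMid (S : Set I) (k' k : I) (L : List (Fm I V)) : Fm I V → Fm I (V ⊕ Fm I V)
  | var v => var (.inl v)
  | top => top
  | neg a => neg (trMid S k' k L a)
  | and a b => and (trMid S k' k L a) (trMid S k' k L b)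
  | imp a b => imp (trMid S k' k L a) (trMid S k' k L b)
  | box i a => if i ∈ S then box i (trMid S k' k L a) else
      if i = k then bigJ k' (deltas L) (trMid S k' k L a) else top

theorem trMid_eq {k' k : I} {L : List (Fm I V)} (a : Fm I V) (h : a.mods ⊆ S) :
    trMid S k' k L a = subst (fun v => var (.inl v)) a := by
  induction a with
  | var v => rfl
  | top => rfl
  | neg a ih => simp [trMid, subst, ih h]
  | and a b iha ihb =>
    simp [trMid, subst, iha (Set.subset_union_left.trans h),
      ihb (Set.subset_union_right.trans h)]
  | imp a b iha ihb =>
    simp [trMid, subst, iha (Set.subset_union_left.trans h),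
      ihb (Set.subset_union_right.trans h)]
  | box i a ih =>
    simp [trMid, subst, ih ((Set.subset_insert _ _).trans h), h (Set.mem_insert _ _)]

theorem bigJ_mods {k : I} (hk : k ∈ S) (l : List (Fm I V)) (hl : ∀ δ ∈ l, δ.mods ⊆ S) :
    ∀ a : Fm I V, a.mods ⊆ S → (bigJ k l a).mods ⊆ S := by
  induction l with
  | nil => intro a ha; exact Set.insert_subset hk ha
  | cons x l ih =>
    intro a ha
    have ih := ih fun δ h => hl δ (by simp [h])
    have hx := hl x (by simp)
    exact Set.union_subset (ih a ha) (Set.union_subset hx (ih _ (Set.union_subset hx ha)))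

theorem trMid_mods {k' k : I} (hk : k' ∈ S) {L : List (Fm I V)} (a : Fm I V) :
    (trMid S k' k L a).mods ⊆ S := by
  induction a with
  | var v => exact Set.empty_subset _
  | top => exact Set.empty_subset _
  | neg a ih => exact ih
  | and a b iha ihb => exact Set.union_subset iha ihb
  | imp a b iha ihb => exact Set.union_subset iha ihb
  | box i a ih =>
    simp only [trMid]
    split_ifs with h1 h2
    · exact Set.insert_subset h1 ih
    · refine bigJ_mods hk _ ?_ _ ih
      intro δ hδ
      obtain ⟨x, _, rfl⟩ := List.mem_map.1 hδ
      exact Set.empty_subset _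
    · exact Set.empty_subset _

def midEqs (S : Set I) (k' k : I) (L : List (Fm I V)) : Set (Fm I (V ⊕ Fm I V)) :=
  {a | ∃ x ∈ L, a = iff (var (.inr x)) (box k' (trMid S k' k L x))}

theorem mid_sound {k' k : I} (hk' : k' ∈ S) (hlt : k' < k)
    (hmax : ∀ i ∈ S, i < k → i ≤ k') (ha : Pf S ∅ a) :
    ∃ L0 : List (Fm I V), ∀ L, L0 ⊆ L →
      Pf (S \ {k}) (midEqs (S \ {k}) k' k L) (trMid (S \ {k}) k' k L a) := by
  have hk'S : k' ∈ S \ {k} := ⟨hk', hlt.ne⟩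
  have hkn : k ∉ S \ {k} := fun h => h.2 rfl
  have hS : ∀ i ∈ S, i ∉ S \ {k} → i = k := fun i h h' => by
    by_contra h''; exact h' ⟨h, h''⟩
  have hgood : ∀ L : List (Fm I V), Good (S \ {k}) (midEqs (S \ {k}) k' k L) k'
      (bigJ k' (deltas L)) ∧ ∀ δ ∈ deltas L, Pf (S \ {k}) (midEqs (S \ {k}) k' k L)
        (imp δ (bigJ k' (deltas L) δ)) := by
    intro L
    refine bigJ_good hk'S _ ?_ ?_
    · intro δ hδ z hz hkz
      obtain ⟨x, hx, rfl⟩ := List.mem_map.1 hδ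
      have h1 : Pf (S \ {k}) (midEqs (S \ {k}) k' k L)
        (iff (var (.inr x)) (box k' (trMid (S \ {k}) k' k L x))) := .ax ⟨x, hx, rfl⟩
      have h2 := (normal_box hz).congr (a := neg (var (.inr x)))
        (b := neg (box k' (trMid (S \ {k}) k' k L x)))
        (h1.t1 fun v hv => by simp only [hv.iff, hv.neg]; tauto)
      exact (box_neg hkz hk'S hz _).t3 h1 h2 fun v hv => by
        simp only [hv.iff, hv.neg, hv.imp]; tauto
    · intro δ hδ z hz hkz
      obtain ⟨x, hx, rfl⟩ := List.mem_map.1 hδ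
      have h1 : Pf (S \ {k}) (midEqs (S \ {k}) k' k L)
        (iff (var (.inr x)) (box k' (trMid (S \ {k}) k' k L x))) := .ax ⟨x, hx, rfl⟩
      have h2 := (normal_box hz).congr (a := neg (neg (var (.inr x))))
        (b := box k' (trMid (S \ {k}) k' k L x))
        (h1.t1 fun v hv => by simp only [hv.iff, hv.neg]; tauto)
      exact (box_pos hkz.le hk'S hz _).t3 h1 h2 fun v hv => by
        simp only [hv.iff, hv.neg, hv.imp]; tauto
  induction ha with
  | @taut a h =>
    refine ⟨[], fun L _ => ?_⟩
    exact .taut fun v hv => h (fun a => v (trMid _ _ _ _ a))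
      ⟨hv.top, fun _ => hv.neg _, fun _ _ => hv.and _ _, fun _ _ => hv.imp _ _⟩
  | ax h => exact h.elim
  | @distr i a b hi =>
    refine ⟨[], fun L _ => ?_⟩
    by_cases hi' : i ∈ S \ {k}
    · simp only [trMid, hi', if_true]; exact .distr hi'
    · obtain rfl := hS i hi hi'
      simp only [trMid, hkn, if_false, if_true]
      exact (hgood L).1.distr _ _
  | @four i a hi =>
    refine ⟨[], fun L _ => ?_⟩
    by_cases hi' : i ∈ S \ {k}
    · simp only [trMid, hi', if_true]; exact .four hi'
    · obtain rfl := hS i hi hi'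
      simp only [trMid, hkn, if_false, if_true]
      exact (hgood L).1.four _
  | @lob i a hi =>
    refine ⟨[], fun L _ => ?_⟩
    by_cases hi' : i ∈ S \ {k}
    · simp only [trMid, hi', if_true]; exact .lob hi'
    · obtain rfl := hS i hi hi'
      simp only [trMid, hkn, if_false, if_true]
      exact (hgood L).1.lob _
  | @negIntro i j a hij h1 h2 =>
    refine ⟨[], fun L _ => ?_⟩
    by_cases hi' : i ∈ S \ {k}
    · by_cases hj' : j ∈ S \ {k}
      · simp only [trMid, hi', hj', if_true]; exact .negIntro hij hi' hj'
      · obtain rfl := hS j h2 hj'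
        simp only [trMid, hkn, hi', if_false, if_true]
        exact ((box_le (hmax i h1 hij) hi' hk'S _).trans' ((hgood L).1.low _)).t1
          fun v hv => by simp only [hv.imp, hv.neg]; tauto
    · obtain rfl := hS i h1 hi'
      have hj' : j ∈ S \ {i} := ⟨h2, hij.ne'⟩
      simp only [trMid, hkn, hj', if_false, if_true]
      exact ((hgood L).1.up j hj' (hlt.trans hij) _).t1
          fun v hv => by simp only [hv.imp, hv.neg]; tauto
  | @mono i j a hij h1 h2 =>
    refine ⟨[neg a], fun L hL => ?_⟩
    by_cases hi' : i ∈ S \ {k}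
    · by_cases hj' : j ∈ S \ {k}
      · simp only [trMid, hi', hj', if_true]; exact .mono hij hi' hj'
      · obtain rfl := hS j h2 hj'
        simp only [trMid, hkn, hi', if_false, if_true]
        rcases (hmax i h1 hij).eq_or_lt with rfl | hik
        · have hx : neg a ∈ L := hL (by simp)
          have h3 : Pf (S \ {j}) (midEqs (S \ {j}) i j L)
            (iff (var (.inr (neg a))) (box i (neg (trMid (S \ {j}) i j L a)))) :=
            .ax ⟨neg a, hx, rfl⟩
          have h4 := (hgood L).2 (neg (var (.inr (neg a)))) (List.mem_map.2 ⟨neg a, hx, rfl⟩)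
          have h5 := (hgood L).1.toNormal.congr (a := neg (var (.inr (neg a))))
            (b := neg (box i (neg (trMid (S \ {j}) i j L a))))
            (h3.t1 fun v hv => by simp only [hv.iff, hv.neg]; tauto)
          exact h3.t3 h4 h5 fun v hv => by simp only [hv.iff, hv.neg, hv.imp]; tauto
        · exact (box_neg hik hi' hk'S _).trans' ((hgood L).1.low _)
    · obtain rfl := hS i h1 hi'
      have hj' : j ∈ S \ {i} := ⟨h2, hij.ne'⟩
      simp only [trMid, hkn, hj', if_false, if_true]
      exact (hgood L).1.upn j hj' (hlt.trans hij) _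
  | mp _ _ h1 h2 =>
    obtain ⟨L1, h1⟩ := h1
    obtain ⟨L2, h2⟩ := h2
    refine ⟨L1 ++ L2, fun L hL => ?_⟩
    exact .mp (h1 L (fun x hx => hL (by simp [hx]))) (h2 L (fun x hx => hL (by simp [hx])))
  | @nec i a hi _ h1 =>
    obtain ⟨L1, h1⟩ := h1
    refine ⟨L1, fun L hL => ?_⟩
    by_cases hi' : i ∈ S \ {k}
    · simp only [trMid, hi', if_true]
      exact .nec hi' (h1 L hL)
    · obtain rfl := hS i hi hi'
      simp only [trMid, hkn, if_false, if_true]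
      exact (hgood L).1.nec (h1 L hL)

theorem remove_mid {k' k : I} (hk' : k' ∈ S) (hlt : k' < k)
    (hmax : ∀ i ∈ S, i < k → i ≤ k') (ha : Pf S ∅ a) (hm : a.mods ⊆ S \ {k}) :
    Pf (S \ {k}) ∅ a := by
  classical
  have hk'S : k' ∈ S \ {k} := ⟨hk', hlt.ne⟩
  obtain ⟨L, hL⟩ := mid_sound hk' hlt hmax ha
  have h1 := hL L (fun _ h => h)
  rw [trMid_eq a hm] at h1
  obtain ⟨σ, h2, h3⟩ := fix_general (S := S \ {k})
    (L.dedup.map fun x => ((.inr x : V ⊕ Fm I V), k', trMid (S \ {k}) k' k L x))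
    (by
      rw [List.map_map]
      exact (List.nodup_dedup L).map Sum.inr_injective)
    (by
      intro e he
      obtain ⟨x, _, rfl⟩ := List.mem_map.1 he
      exact ⟨hk'S, trMid_mods hk'S x⟩)
  have h4 := h3 _ (h1.weaken subset_rfl (by
    rintro _ ⟨x, hx, rfl⟩
    exact .ax ⟨_, List.mem_map.2 ⟨x, List.mem_dedup.2 hx, rfl⟩, rfl⟩))
  have h5 : ∀ v : V, σ (.inl v) = var (.inl v) := fun v => h2 _ (by simp)
  have h6 := h4.subst (Sum.elim var (fun _ => top) : V ⊕ Fm I V → Fm I V)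
  rw [Set.image_empty, subst_subst, subst_subst] at h6
  simp only [subst, h5, Sum.elim_inl] at h6
  rwa [subst_var] at h6

theorem remove_one (hfin : S.Finite) {k : I} (ha : Pf S ∅ a)
    (hm : a.mods ⊆ S \ {k}) : Pf (S \ {k}) ∅ a := by
  by_cases hlow : (S ∩ Set.Iio k).Nonempty
  · obtain ⟨k', hk', hmax⟩ := Set.exists_max_image _ id (hfin.inter_of_left _) hlow
    exact remove_mid hk'.1 hk'.2 (fun i hi hik => hmax i ⟨hi, hik⟩) ha hm
  · have hkS : ∀ i ∈ S, k ≤ i := fun i hi => by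
      by_contra h
      exact hlow ⟨i, hi, not_le.1 h⟩
    by_cases hup : (S \ {k}).Nonempty
    · obtain ⟨h, hh, hmin⟩ := Set.exists_min_image _ id (hfin.subset Set.diff_subset) hup
      exact remove_low hkS hh hmin ha hm
    · have := remove_top (k := k) (fun i hi => by
        by_contra h
        exact hup ⟨i, hi, fun h' => h (le_of_eq h')⟩) ha
      rwa [trTop_eq a hm] at this

theorem remove_all (hfin : S.Finite) (ha : Pf S ∅ a) (hm : a.mods ⊆ S) : Pf a.mods ∅ a := by
  induction hn : (S \ a.mods).ncard generalizing S with
  | zero =>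
    have : S \ a.mods = ∅ := (Set.ncard_eq_zero (hfin.subset Set.diff_subset)).1 hn
    exact ha.weaken (Set.diff_eq_empty.1 this) fun _ h => h.elim
  | succ n ih =>
    obtain ⟨k, hk⟩ := Set.nonempty_of_ncard_ne_zero (by omega : (S \ a.mods).ncard ≠ 0)
    have hm' : a.mods ⊆ S \ {k} := fun x hx => ⟨hm hx, fun h => hk.2 (h ▸ hx)⟩
    refine ih (hfin.subset Set.diff_subset) (remove_one hfin ha hm') hm' ?_
    have : (S \ {k}) \ a.mods = (S \ a.mods) \ {k} := by
      ext x; simp only [Set.mem_diff]; tauto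
    rw [this, Set.ncard_diff_singleton_of_mem hk]
    omega

theorem mods_finite (a : Fm I V) : a.mods.Finite := by
  induction a with
  | var v => exact Set.finite_empty
  | top => exact Set.finite_empty
  | neg a ih => exact ih
  | and a b iha ihb => exact iha.union ihb
  | imp a b iha ihb => exact iha.union ihb
  | box i a ih => exact ih.insert i

theorem conservation (ha : Pf S ∅ a) : Pf a.mods ∅ a := by
  obtain ⟨T, hT, _, h⟩ := ha.finite
  exact remove_all (hT.union a.mods_finite)
    (h.weaken Set.subset_union_left fun _ h => h.elim) Set.subset_union_right

end Fm

/-! ### Transfer to the frozen definitions -/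

def toFm : GLPFormula → Fm Ordinal.{0} ℕ
  | .var p => .var p
  | .top => .top
  | .neg a => .neg (toFm a)
  | .and a b => .and (toFm a) (toFm b)
  | .imp a b => .imp (toFm a) (toFm b)
  | .box i a => .box i (toFm a)

theorem toFm_mods (a : GLPFormula) : (toFm a).mods = a.mods := by
  induction a <;> simp_all [toFm, Fm.mods, GLPFormula.mods]

theorem toFm_pf {S : Set Ordinal.{0}} {a : GLPFormula} (h : GLPProof S a) : Fm.Pf S ∅ (toFm a) := by
  classical
  induction h with
  | taut _ h =>
    refine .taut fun v hv => ?_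
    have := h (fun b => decide (v (toFm b))) (by simp [toFm, hv.top])
      (fun b => by simp [toFm, hv.neg]) (fun b c => by simp [toFm, hv.and])
      (fun b c => by
        simp only [toFm, hv.imp]
        by_cases h1 : v (toFm b) <;> simp [h1])
    simpa using this
  | distr h _ _ => exact .distr h
  | trans h _ => exact .four h
  | lob h _ => exact .lob h
  | negIntro h h1 h2 _ => exact .negIntro h h1 h2
  | mono h h1 h2 _ => exact .mono h h1 h2
  | mp _ _ h1 h2 => exact .mp h1 h2
  | nec h _ h1 => exact .nec h h1

open Classical in
noncomputable def backFm (S : Set Ordinal.{0}) (s : Ordinal.{0} → ℕ) : Fm Ordinal.{0} ℕ → GLPFormula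
  | .var p => .var p
  | .top => .top
  | .neg a => .neg (backFm S s a)
  | .and a b => .and (backFm S s a) (backFm S s b)
  | .imp a b => .imp (backFm S s a) (backFm S s b)
  | .box i a => if i ∈ S then .box (s i : Ordinal.{0}) (backFm S s a) else .top

theorem backFm_mods (S : Set Ordinal.{0}) (s : Ordinal.{0} → ℕ) (a : Fm Ordinal.{0} ℕ) :
    (backFm S s a).mods ⊆ Set.Iio Ordinal.omega0.{0} := by
  induction a with
  | var v => exact Set.empty_subset _
  | top => exact Set.empty_subset _
  | neg a ih => exact ih
  | and a b iha ihb => exact Set.union_subset iha ihb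
  | imp a b iha ihb => exact Set.union_subset iha ihb
  | box i a ih =>
    simp only [backFm]
    split_ifs
    · exact Set.insert_subset (Ordinal.natCast_lt_omega0 _) ih
    · exact Set.empty_subset _

theorem backFm_toFm (S : Set Ordinal.{0}) (s : Ordinal.{0} → ℕ) (a : GLPFormula) (h : a.mods ⊆ S) :
    backFm S s (toFm a) = relabel (fun ξ => ((s ξ : ℕ) : Ordinal.{0})) a := by
  induction a with
  | var v => rfl
  | top => rfl
  | neg a ih => simp [toFm, backFm, relabel, ih h]
  | and a b iha ihb =>
    simp [toFm, backFm, relabel, iha (Set.subset_union_left.trans h),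
      ihb (Set.subset_union_right.trans h)]
  | imp a b iha ihb =>
    simp [toFm, backFm, relabel, iha (Set.subset_union_left.trans h),
      ihb (Set.subset_union_right.trans h)]
  | box i a ih =>
    simp [toFm, backFm, relabel, ih ((Set.subset_insert _ _).trans h), h (Set.mem_insert _ _)]

theorem backFm_pf {S : Set Ordinal.{0}} {s : Ordinal.{0} → ℕ}
    (hs : ∀ a ∈ S, ∀ b ∈ S, a < b → s a < s b) {a : Fm Ordinal.{0} ℕ} (h : Fm.Pf S ∅ a) :
    GLPProof (Set.Iio Ordinal.omega0.{0}) (backFm S s a) := by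
  have hn : ∀ n : ℕ, (n : Ordinal.{0}) ∈ Set.Iio Ordinal.omega0.{0} := fun n => Ordinal.natCast_lt_omega0 n
  have hm := backFm_mods S s
  induction h with
  | taut h =>
    refine .taut (hm _) fun v h1 h2 h3 h4 => ?_
    exact h (fun b => v (backFm S s b) = true) ⟨h1, fun b => by simp [backFm, h2],
      fun b c => by simp [backFm, h3], fun b c => by
        simp only [backFm, h4]
        cases v (backFm S s b) <;> simp⟩
  | ax h => exact h.elim
  | distr h => simp only [backFm, h, if_true]; exact .distr (hn _) (hm _) (hm _)
  | four h => simp only [backFm, h, if_true]; exact .trans (hn _) (hm _)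
  | lob h => simp only [backFm, h, if_true]; exact .lob (hn _) (hm _)
  | negIntro h h1 h2 =>
    simp only [backFm, h1, h2, if_true]
    exact .negIntro (by exact_mod_cast hs _ h1 _ h2 h) (hn _) (hn _) (hm _)
  | mono h h1 h2 =>
    simp only [backFm, h1, h2, if_true]
    exact .mono (by exact_mod_cast hs _ h1 _ h2 h) (hn _) (hn _) (hm _)
  | mp _ _ h1 h2 => exact .mp h1 h2
  | nec h _ h1 => simp only [backFm, h, if_true]; exact .nec (hn _) h1


/-- Demotion: if `s` is the strictly increasing enumeration of the modality indices
of `φ ∧ ψ` and `⊢_GLP φ → ψ`, then `⊢_{GLP_ω} φ̄ → ψ̄`. -/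
theorem demotion (φ ψ : GLPFormula) (s : Ordinal → ℕ)
    (hmono : ∀ a ∈ (φ.and ψ).mods, ∀ b ∈ (φ.and ψ).mods, a < b → s a < s b)
    (henum : s '' (φ.and ψ).mods = Set.Iio ((φ.and ψ).mods.ncard))
    (h : GLPProves (φ.imp ψ)) :
    GLPomegaProves ((relabel (fun ξ => ((s ξ : ℕ) : Ordinal)) φ).imp
      (relabel (fun ξ => ((s ξ : ℕ) : Ordinal)) ψ)) := by
  have h1 := Fm.conservation (toFm_pf h)
  rw [toFm_mods] at h1
  have h2 := backFm_pf (s := s) hmono h1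
  have h3 := backFm_toFm (φ.and ψ).mods s (φ.imp ψ) subset_rfl
  have h4 : GLPProof (Set.Iio Ordinal.omega0) (backFm (φ.and ψ).mods s (toFm (φ.imp ψ))) := h2
  rw [h3] at h4
  exact h4
end

section
/- (Promotion) Let φ and ψ be GLP formulas, let s : mod(φ∧ψ) → ω be the strictly increasing enumeration of the finite set of ordinals occurring as modality indices in φ∧ψ, and let φ̄ and ψ̄ be obtained from φ and ψ by replacing every modality index ξ by s(ξ). If ⊢_{GLP_ω} φ̄ → ψ̄, then ⊢_GLP φ → ψ. -/
theorem taut_relabel (t : Ordinal → Ordinal) {φ : GLPFormula} (h : IsTautology φ) :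
    IsTautology (relabel t φ) := by
  intro v h1 h2 h3 h4
  exact h (fun χ => v (relabel t χ)) h1 (fun _ => h2 _) (fun _ _ => h3 _ _) (fun _ _ => h4 _ _)

theorem proof_relabel (S : Set Ordinal) (t : Ordinal → Ordinal)
    (ht : ∀ a ∈ S, ∀ b ∈ S, a < b → t a < t b) {φ : GLPFormula} (h : GLPProof S φ) :
    GLPProof Set.univ (relabel t φ) := by
  induction h with
  | taut _ h => exact .taut (Set.subset_univ _) (taut_relabel t h)
  | distr => exact .distr trivial (Set.subset_univ _) (Set.subset_univ _)
  | trans => exact .trans trivial (Set.subset_univ _)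
  | lob => exact .lob trivial (Set.subset_univ _)
  | negIntro h h1 h2 => exact .negIntro (ht _ h1 _ h2 h) trivial trivial (Set.subset_univ _)
  | mono h h1 h2 => exact .mono (ht _ h1 _ h2 h) trivial trivial (Set.subset_univ _)
  | mp _ _ ih1 ih2 => exact .mp ih1 ih2
  | nec _ _ ih => exact .nec trivial ih

theorem relabel_relabel (s t : Ordinal → Ordinal) (φ : GLPFormula)
    (h : ∀ a ∈ φ.mods, t (s a) = a) : relabel t (relabel s φ) = φ := by
  induction φ with
  | var => rfl
  | top => rfl
  | neg φ ih => simp only [relabel]; rw [ih h]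
  | and φ ψ ih1 ih2 =>
    simp only [relabel]
    rw [ih1 (fun a ha => h a (Or.inl ha)), ih2 (fun a ha => h a (Or.inr ha))]
  | imp φ ψ ih1 ih2 =>
    simp only [relabel]
    rw [ih1 (fun a ha => h a (Or.inl ha)), ih2 (fun a ha => h a (Or.inr ha))]
  | box ξ φ ih =>
    simp only [relabel]
    rw [ih (fun a ha => h a (Or.inr ha)), h ξ (Or.inl rfl)]

theorem mods_bounded (φ : GLPFormula) : ∃ b : Ordinal, ∀ a ∈ φ.mods, a < b := by
  induction φ with
  | var => exact ⟨0, fun a ha => ha.elim⟩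
  | top => exact ⟨0, fun a ha => ha.elim⟩
  | neg φ ih => exact ih
  | and φ ψ ih1 ih2 =>
    obtain ⟨b, hb⟩ := ih1
    obtain ⟨c, hc⟩ := ih2
    exact ⟨max b c, fun a ha => ha.elim (fun h => lt_max_of_lt_left (hb a h))
      (fun h => lt_max_of_lt_right (hc a h))⟩
  | imp φ ψ ih1 ih2 =>
    obtain ⟨b, hb⟩ := ih1
    obtain ⟨c, hc⟩ := ih2
    exact ⟨max b c, fun a ha => ha.elim (fun h => lt_max_of_lt_left (hb a h))
      (fun h => lt_max_of_lt_right (hc a h))⟩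
  | box ξ φ ih =>
    obtain ⟨b, hb⟩ := ih
    exact ⟨max b (Order.succ ξ), fun a ha => ha.elim
      (fun h => lt_max_of_lt_right (h ▸ Order.lt_succ _))
      (fun h => lt_max_of_lt_left (hb a h))⟩

/-- Promotion: if `s` is the strictly increasing enumeration of the modality indices
of `φ ∧ ψ` and `⊢_{GLP_ω} φ̄ → ψ̄`, then `⊢_GLP φ → ψ`. -/
theorem promotion (φ ψ : GLPFormula) (s : Ordinal → ℕ)
    (hmono : ∀ a ∈ (φ.and ψ).mods, ∀ b ∈ (φ.and ψ).mods, a < b → s a < s b)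
    (henum : s '' (φ.and ψ).mods = Set.Iio ((φ.and ψ).mods.ncard))
    (h : GLPomegaProves ((relabel (fun ξ => ((s ξ : ℕ) : Ordinal)) φ).imp
      (relabel (fun ξ => ((s ξ : ℕ) : Ordinal)) ψ))) :
    GLPProves (φ.imp ψ) := by
  classical
  obtain ⟨b, hb⟩ := mods_bounded (φ.and ψ)
  -- the (total, strictly increasing) inverse of `s`
  have hg : ∀ i : ℕ, ∃ x : Ordinal, (x ∈ (φ.and ψ).mods ∧ s x = i) ∨
      ((¬ i < (φ.and ψ).mods.ncard) ∧ x = b + i) := by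
    intro i
    by_cases hi : i < (φ.and ψ).mods.ncard
    · have h1 : i ∈ s '' (φ.and ψ).mods := by rw [henum]; exact hi
      obtain ⟨x, hx, hs⟩ := h1
      exact ⟨x, Or.inl ⟨hx, hs⟩⟩
    · exact ⟨b + i, Or.inr ⟨hi, rfl⟩⟩
  choose g hg using hg
  have hlt : ∀ a ∈ (φ.and ψ).mods, s a < (φ.and ψ).mods.ncard := by
    intro a ha
    have h1 : s a ∈ s '' (φ.and ψ).mods := ⟨a, ha, rfl⟩
    rw [henum] at h1
    exact h1
  have hgmono : ∀ i j : ℕ, i < j → g i < g j := by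
    intro i j hij
    rcases hg i with ⟨hi, hi2⟩ | ⟨hi, hi2⟩ <;> rcases hg j with ⟨hj, hj2⟩ | ⟨hj, hj2⟩
    · rcases lt_trichotomy (g i) (g j) with h1 | h1 | h1
      · exact h1
      · rw [h1] at hi2; omega
      · have := hmono _ hj _ hi h1; omega
    · rw [hj2]
      exact (hb _ hi).trans_le le_self_add
    · have := hlt _ hj; omega
    · rw [hi2, hj2]
      have : (i : Ordinal) < j := by exact_mod_cast hij
      gcongr
  have hgs : ∀ a ∈ (φ.and ψ).mods, g (s a) = a := by
    intro a ha
    rcases hg (s a) with ⟨hi, hi2⟩ | ⟨hi, hi2⟩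
    · rcases lt_trichotomy (g (s a)) a with h1 | h1 | h1
      · have := hmono _ hi _ ha h1; omega
      · exact h1
      · have := hmono _ ha _ hi h1; omega
    · exact absurd (hlt a ha) hi
  have hex : ∃ t : Ordinal → Ordinal, ∀ n : ℕ, t (n : Ordinal) = g n :=
    ⟨Function.extend (Nat.cast : ℕ → Ordinal) g 0,
      fun n => Function.Injective.extend_apply Nat.cast_injective g 0 n⟩
  obtain ⟨t, ht⟩ := hex
  have key := proof_relabel _ t (by
    intro x hx y hy hxy
    obtain ⟨m, rfl⟩ := Ordinal.lt_omega0.1 hx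
    obtain ⟨n, rfl⟩ := Ordinal.lt_omega0.1 hy
    rw [ht, ht]
    exact hgmono _ _ (by exact_mod_cast hxy)) h
  have e := relabel_relabel (fun ξ => ((s ξ : ℕ) : Ordinal)) t (φ.imp ψ) (by
    intro a ha
    show t ((s a : ℕ) : Ordinal) = a
    rw [ht]
    exact hgs a ha)
  simp only [relabel] at e key
  rw [e] at key
  exact key
end
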